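/- arXiv:1503.05261 — 2 statements merged into one kernel-verified Lean document; each statement's English description precedes it below -/
import Mathlib

section
/- Let n ≥ 1 and let T = MvPolynomial ((Fin n × Fin n) ⊕ (Fin n × Fin n)) ℂ be the polynomial ring over ℂ in 2n² variables Y_{ij} and Ξ_{ij} (1 ≤ i,j ≤ n). Let J' ⊆ T be the ideal generated by: the polynomials δ_{ij} − Σ_{k=1}^n Y_{ki}Y_{kj} and δ_{ij} − Σ_{k=1}^n Y_{ik}Y_{jk} for 1 ≤ i ≤ j ≤ n; the polynomial 1 − det(Y) where det(Y) = Σ_{σ ∈ S_n} sgn(σ) Π_{i=1}^n Y_{iσ(i)}; and the polynomials Ξ_{ij} − Ξ_{ji} for 1 ≤ i < j ≤ n. Then J' is a prime ideal of T and the Krull dimension of T/J' equals n². -/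
/-!
Write `B = T / J'`, with tautological matrices `y`, `ξ`. Then `B` represents the functor of pairs
`(Y, Ξ)` with `Y` special orthogonal and `Ξ` symmetric, and this universal property
(`IsUniversalPair`) is all that is used about `B`.

**Charts.** The Cayley transform `S = (1 - W) (1 + W)⁻¹` is an involution that exchanges special
orthogonal `W` and skew-symmetric `S`, where `1 + W` and `1 + S` are invertible. For a diagonal
sign matrix `ε` of determinant `1`, applying it to `W = εY` identifies the localization of `B` at
`det (1 + εy)` with a localization of the polynomial ring in `n²` variables: the variables strictly
above the diagonal fill a skew-symmetric matrix `S`, the others a symmetric matrix `Ξ`. On the side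
of polynomials it is enough to invert `det (1 + S)`, which gives `CayRing n`, and the chart appears
as a map `B → CayRing n` whose kernel is killed by powers of `det (1 + εy)`
(`IsUniversalPair.exists_pow_mul_eq_zero`).

**Gluing.** The sum of `det (1 + εy)` over all sign matrices is the unit `2ⁿ`
(`sum_det_one_add_signMatrix_mul`), and the terms with `det ε = -1` vanish
(`det_one_add_eq_zero`), so the charts cover. They meet pairwise: if `det ε = 1`, then
`det ((1 + S) + ε (1 - S))` is not identically zero on skew matrices `S`
(`exists_skew_det_ne_zero`). Hence each chart map `B → CayRing n` is injective
(`injective_of_cover`), `B` is a domain and `J'` is prime.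

**Dimension.** `CayRing n` is a localization of a polynomial ring in `n²` variables, so it has
transcendence degree `n²` over `ℂ`. It is algebraic over `B`, because the entries of
`S = (1 - y) (1 + y)⁻¹` are fractions of elements of `B`; so `B` has transcendence degree `n²` too.
For a finitely generated domain this is the Krull dimension, by Noether normalization and the
invariance of dimension under integral extensions (`ringKrullDim_eq_of_trdeg`).
-/

open MvPolynomial

/-- The variable `Y i j` of the polynomial ring in the two families of `n²` variables. -/
noncomputable def Yv (n : ℕ) (i j : Fin n) :
    MvPolynomial ((Fin n × Fin n) ⊕ (Fin n × Fin n)) ℂ :=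
  X (Sum.inl (i, j))

/-- The variable `Ξ i j` of the polynomial ring in the two families of `n²` variables. -/
noncomputable def Xv (n : ℕ) (i j : Fin n) :
    MvPolynomial ((Fin n × Fin n) ⊕ (Fin n × Fin n)) ℂ :=
  X (Sum.inr (i, j))

/-- The determinant of the generic matrix `(Y i j)`. -/
noncomputable def detYv (n : ℕ) :
    MvPolynomial ((Fin n × Fin n) ⊕ (Fin n × Fin n)) ℂ :=
  Matrix.det (Matrix.of fun i j : Fin n => Yv n i j)

/-- The generators `δᵢⱼ - Σₖ Y k i * Y k j`, `δᵢⱼ - Σₖ Y i k * Y j k` (for `i ≤ j`)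
and `1 - det Y` cutting out the complex special orthogonal group. -/
def orthoGens (n : ℕ) :
    Set (MvPolynomial ((Fin n × Fin n) ⊕ (Fin n × Fin n)) ℂ) :=
  {p | ∃ i j : Fin n, i ≤ j ∧
      p = (if i = j then 1 else 0) - ∑ k, Yv n k i * Yv n k j} ∪
  {p | ∃ i j : Fin n, i ≤ j ∧
      p = (if i = j then 1 else 0) - ∑ k, Yv n i k * Yv n j k} ∪
  {1 - detYv n}

open Matrix

/-! ### The Cayley transform -/

section Cayley
variable {ι A : Type*} [Fintype ι] [DecidableEq ι] [CommRing A]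

/-- The Cayley transform `(1 - M) (1 + M)⁻¹`; it is meaningful only when `det (1 + M)` is a unit,
since `⁻¹` of a singular matrix is `0`. -/
noncomputable def cayley (M : Matrix ι ι A) : Matrix ι ι A := (1 - M) * (1 + M)⁻¹

theorem cayley_mul {M : Matrix ι ι A} (h : IsUnit (1 + M).det) :
    cayley M * (1 + M) = 1 - M := by
  rw [cayley, Matrix.mul_assoc, nonsing_inv_mul _ h, Matrix.mul_one]

theorem eq_cayley {M N : Matrix ι ι A} (h : IsUnit (1 + M).det) (hN : N * (1 + M) = 1 - M) :
    N = cayley M := by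
  rw [cayley, ← hN, Matrix.mul_assoc, mul_nonsing_inv _ h, Matrix.mul_one]

theorem one_add_cayley_mul {M : Matrix ι ι A} (h : IsUnit (1 + M).det) :
    (1 + cayley M) * (1 + M) = (2 : A) • (1 : Matrix ι ι A) := by
  rw [Matrix.add_mul, cayley_mul h, two_smul, Matrix.one_mul]; abel

theorem det_one_add_cayley {M : Matrix ι ι A} (h : IsUnit (1 + M).det) :
    (1 + cayley M).det * (1 + M).det = 2 ^ Fintype.card ι := by
  rw [← det_mul, one_add_cayley_mul h, det_smul, det_one, mul_one]

theorem isUnit_det_one_add_cayley (h2 : IsUnit (2 : A)) {M : Matrix ι ι A}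
    (h : IsUnit (1 + M).det) : IsUnit (1 + cayley M).det := by
  have := h2.pow (Fintype.card ι)
  rw [← det_one_add_cayley h] at this
  exact isUnit_of_mul_isUnit_left this

theorem cayley_cayley (h2 : IsUnit (2 : A)) {M : Matrix ι ι A} (h : IsUnit (1 + M).det) :
    cayley (cayley M) = M := by
  refine (eq_cayley (isUnit_det_one_add_cayley h2 h) ?_).symm
  have hc : (M * (1 + cayley M)) * (1 + M) = (1 - cayley M) * (1 + M) := by
    rw [Matrix.mul_assoc, one_add_cayley_mul h, Matrix.sub_mul, cayley_mul h, two_smul,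
      Matrix.mul_add, Matrix.mul_one, Matrix.one_mul]; abel
  have := congrArg (· * (1 + M)⁻¹) hc
  simpa only [Matrix.mul_assoc, mul_nonsing_inv _ h, Matrix.mul_one] using this

theorem map_det_of_ringHomClass {A' F : Type*} [CommRing A'] [FunLike F A A']
    [RingHomClass F A A'] (f : F) (M : Matrix ι ι A) : f M.det = (M.map f).det :=
  RingHom.map_det (f : A →+* A') M

theorem map_one_add {A' F : Type*} [CommRing A'] [FunLike F A A']
    [RingHomClass F A A'] (f : F) (M : Matrix ι ι A) : (1 + M).map f = 1 + M.map f := by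
  rw [Matrix.map_add _ (map_add f), Matrix.map_one _ (map_zero f) (map_one f)]

theorem cayley_map {A' F : Type*} [CommRing A'] [FunLike F A A'] [RingHomClass F A A'] (f : F)
    {M : Matrix ι ι A} (h : IsUnit (1 + M).det) : (cayley M).map f = cayley (M.map f) := by
  refine eq_cayley ?_ ?_
  · rw [← map_one_add, ← map_det_of_ringHomClass]
    exact h.map f
  · rw [← map_one_add, ← Matrix.map_mul, cayley_mul h, Matrix.map_sub _ (map_sub f),
      Matrix.map_one _ (map_zero f) (map_one f)]

/-- The Cayley transform of a skew-symmetric matrix is orthogonal. -/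
theorem cayley_transpose_mul_self {S : Matrix ι ι A} (hS : Sᵀ = -S) (h : IsUnit (1 + S).det) :
    (cayley S)ᵀ * cayley S = 1 := by
  have hT : (1 - S) = (1 + S)ᵀ := by rw [transpose_add, transpose_one, hS, sub_eq_add_neg]
  have hQ : IsUnit (1 - S).det := by rwa [hT, det_transpose]
  have hcomm : (1 + S) * (1 - S) = (1 - S) * (1 + S) := by noncomm_ring
  have h1 : (cayley S)ᵀ = (1 - S)⁻¹ * (1 + S) := by
    rw [cayley, transpose_mul, transpose_nonsing_inv, ← hT]
    congr 1
    rw [hT, transpose_transpose]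
  rw [h1, cayley, Matrix.mul_assoc, ← Matrix.mul_assoc (1 + S), hcomm, Matrix.mul_assoc (1 - S),
    mul_nonsing_inv _ h, Matrix.mul_one, nonsing_inv_mul _ hQ]

theorem det_cayley {S : Matrix ι ι A} (hS : Sᵀ = -S) (h : IsUnit (1 + S).det) :
    (cayley S).det = 1 := by
  have hT : (1 - S) = (1 + S)ᵀ := by rw [transpose_add, transpose_one, hS, sub_eq_add_neg]
  rw [cayley, det_mul, hT, det_transpose, ← det_mul, mul_nonsing_inv _ h, det_one]

/-- The Cayley transform of an orthogonal matrix is skew-symmetric. -/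
theorem cayley_transpose {W : Matrix ι ι A} (hW : Wᵀ * W = 1) (h : IsUnit (1 + W).det) :
    (cayley W)ᵀ = -cayley W := by
  have hc : (1 + W) * cayley W = 1 - W := by
    have hcomm : (1 + W) * (1 - W) = (1 - W) * (1 + W) := by noncomm_ring
    rw [cayley, ← Matrix.mul_assoc, hcomm, Matrix.mul_assoc, mul_nonsing_inv _ h, Matrix.mul_one]
  rw [eq_neg_iff_add_eq_zero, ← eq_neg_iff_add_eq_zero, ← neg_eq_iff_eq_neg]
  refine eq_cayley h ?_
  have h1 := congrArg (·ᵀ * W) hc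
  simp only [transpose_mul, transpose_add, transpose_one, transpose_sub, Matrix.mul_assoc,
    Matrix.add_mul, Matrix.sub_mul, hW, Matrix.one_mul] at h1
  rw [Matrix.neg_mul, add_comm 1 W, Matrix.mul_add, h1, neg_sub]

/-- An orthogonal matrix of determinant `-1` has eigenvalue `-1`: since `1 + W = W (1 + W)ᵀ`, the
determinant of `1 + W` equals its own negative. -/
theorem det_one_add_eq_zero (h2 : IsUnit (2 : A)) {W : Matrix ι ι A} (hW : W * Wᵀ = 1)
    (hd : W.det = -1) : (1 + W).det = 0 := by
  have h : (1 + W) = W * (1 + W)ᵀ := by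
    rw [transpose_add, transpose_one, Matrix.mul_add, hW, Matrix.mul_one, add_comm]
  have h1 : (1 + W).det = -(1 + W).det := by
    conv_lhs => rw [h, det_mul, det_transpose, hd, neg_one_mul]
  have h3 : 2 * (1 + W).det = 0 := by linear_combination h1
  exact (h2.mul_right_eq_zero).1 h3

/-! ### Sign matrices -/

/-- The diagonal matrix with the signs `ε i` on the diagonal. -/
def signMatrix (A : Type*) [CommRing A] (ε : ι → ℤˣ) : Matrix ι ι A :=
  diagonal fun i => ((ε i : ℤ) : A)

theorem signMatrix_transpose (ε : ι → ℤˣ) : (signMatrix A ε)ᵀ = signMatrix A ε :=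
  diagonal_transpose _

theorem signMatrix_mul_self (ε : ι → ℤˣ) : signMatrix A ε * signMatrix A ε = 1 := by
  rw [signMatrix, diagonal_mul_diagonal, ← diagonal_one]
  congr 1; ext i
  rw [← Int.cast_mul, ← Units.val_mul, Int.units_mul_self]; simp

theorem signMatrix_one : signMatrix A (1 : ι → ℤˣ) = 1 := by
  simp [signMatrix]

theorem signMatrix_map {A' F : Type*} [CommRing A'] [FunLike F A A'] [RingHomClass F A A']
    (f : F) (ε : ι → ℤˣ) :
    (signMatrix A ε).map f = signMatrix A' ε := by
  rw [signMatrix, diagonal_map (map_zero f)]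
  simp [signMatrix]

theorem det_signMatrix (ε : ι → ℤˣ) : (signMatrix A ε).det = (((∏ i, ε i : ℤˣ) : ℤ) : A) := by
  rw [signMatrix, det_diagonal]; simp

/-- By the Leibniz expansion, averaging over all sign matrices kills the contribution of `Y` to each
factor, leaving `∑ ε, det (1 + ε Y) = det (2 • 1)`. -/
theorem sum_det_one_add_signMatrix_mul (Y : Matrix ι ι A) :
    ∑ ε : ι → ℤˣ, (1 + signMatrix A ε * Y).det = 2 ^ Fintype.card ι := by
  have h : ∀ ε : ι → ℤˣ, (1 + signMatrix A ε * Y).det =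
      ∑ σ : Equiv.Perm ι, ((σ.sign : ℤ) : A) *
        ∏ i, ((1 : Matrix ι ι A) i (σ i) + ((ε i : ℤ) : A) * Y i (σ i)) := by
    intro ε
    rw [← det_transpose, det_apply']
    simp [signMatrix]
  simp_rw [h]
  rw [Finset.sum_comm]
  simp_rw [← Finset.mul_sum]
  have h' : ∀ σ : Equiv.Perm ι, ∑ ε : ι → ℤˣ,
      ∏ i, ((1 : Matrix ι ι A) i (σ i) + ((ε i : ℤ) : A) * Y i (σ i)) =
      ∏ i, ((2 : A) • (1 : Matrix ι ι A))ᵀ (σ i) i := by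
    intro σ
    rw [← Fintype.prod_sum (fun i (e : ℤˣ) =>
      (1 : Matrix ι ι A) i (σ i) + ((e : ℤ) : A) * Y i (σ i))]
    refine Finset.prod_congr rfl fun i _ => ?_
    rw [show (Finset.univ : Finset ℤˣ) = {1, -1} from rfl,
      Finset.sum_pair (by decide)]
    simp
    ring
  simp_rw [h']
  rw [← det_apply', det_transpose, det_smul, det_one, mul_one]

/-- If `det ε = 1`, the charts of the Cayley transform belonging to `1` and to `ε` meet. The number
of `i` with `ε i = -1` is even, so a fixed-point-free involution pairs up these indices; take for
`S` the corresponding signed permutation matrix, extended by zero. Then `(1 + S) + ε (1 - S)` is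
`2 • 1` on the indices with `ε i = 1` and `2 • S` on the others. -/
theorem exists_skew_det_ne_zero [LinearOrder ι] (ε : ι → ℤˣ) (hε : ∏ i, ε i = 1) :
    ∃ S : Matrix ι ι ℂ, Sᵀ = -S ∧ ((1 + S) + signMatrix ℂ ε * (1 - S)).det ≠ 0 := by
  -- `τ` pairs up the indices of sign `-1` and fixes the others.
  obtain ⟨τ, hτ, hfix⟩ : ∃ τ : Equiv.Perm ι, (∀ i, τ (τ i) = i) ∧ ∀ i, τ i = i ↔ ε i = 1 := by
    have hcard : Even (Fintype.card {i // ε i = -1}) := by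
      have h1 : ∏ i, ε i = (-1) ^ (Fintype.card {i // ε i = -1}) := by
        rw [Fintype.card_subtype, ← Finset.prod_const, Finset.prod_filter]
        refine Finset.prod_congr rfl fun i _ => ?_
        rcases Int.units_eq_one_or (ε i) with h | h <;> simp [h]
      rw [hε] at h1
      by_contra hodd
      rw [Nat.not_even_iff_odd] at hodd
      rw [hodd.neg_one_pow] at h1
      exact absurd h1 (by decide)
    obtain ⟨m, hm⟩ := hcard
    have e : {i // ε i = -1} ≃ Fin m ⊕ Fin m :=
      Fintype.equivOfCardEq (by simp [hm])
    let τ₀ : Equiv.Perm {i // ε i = -1} := (e.trans (Equiv.sumComm _ _)).trans e.symm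
    have hτ₀ : ∀ i, τ₀ (τ₀ i) = i := fun i => by simp [τ₀]
    have hτ₁ : ∀ i, τ₀ i ≠ i := fun i h => by
      have : (e i).swap = e i := by
        have := congrArg e h
        simpa [τ₀] using this
      rcases hh : e i with a | a <;> simp [hh] at this
    refine ⟨Equiv.Perm.ofSubtype τ₀, fun i => ?_, fun i => ?_⟩
    · by_cases h : ε i = -1
      · rw [Equiv.Perm.ofSubtype_apply_of_mem τ₀ h, Equiv.Perm.ofSubtype_apply_coe, hτ₀]
      · rw [Equiv.Perm.ofSubtype_apply_of_not_mem τ₀ h, Equiv.Perm.ofSubtype_apply_of_not_mem τ₀ h]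
    · by_cases h : ε i = -1
      · rw [Equiv.Perm.ofSubtype_apply_of_mem τ₀ h, h]
        simp only [show ((-1 : ℤˣ) = 1) ↔ False by decide, iff_false]
        exact fun hh => hτ₁ ⟨i, h⟩ (Subtype.ext hh)
      · rw [Equiv.Perm.ofSubtype_apply_of_not_mem τ₀ h]
        rcases Int.units_eq_one_or (ε i) with h' | h'
        · simp [h']
        · exact absurd h' h
  let s : ι → ℂ := fun i => if i < τ i then 1 else -1
  -- Up to the permutation `τ`, the matrix under the determinant is diagonal with entries `c`.
  let c : ι → ℂ := fun i => if τ i = i then 2 else 2 * s i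
  refine ⟨of fun i j => if τ i = j ∧ i ≠ j then s i else 0, ?_, ?_⟩
  · ext i j
    simp only [transpose_apply, of_apply, Matrix.neg_apply]
    have hij : τ j = i ↔ τ i = j := ⟨fun h => by rw [← h, hτ], fun h => by rw [← h, hτ]⟩
    by_cases h : τ i = j
    · by_cases hne : i = j
      · simp [hne]
      · have hj := hij.2 h
        rcases lt_or_gt_of_ne hne with hlt | hlt
        · simp [s, h, hj, hlt, hlt.not_gt, hne, Ne.symm hne]
        · simp [s, h, hj, hlt, hlt.not_gt, hne, Ne.symm hne]
    · simp [h, hij]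
  · have key : ((1 + of fun i j => if τ i = j ∧ i ≠ j then s i else 0) +
        signMatrix ℂ ε * (1 - of fun i j => if τ i = j ∧ i ≠ j then s i else 0)) =
        diagonal c * (τ.toPEquiv.toMatrix : Matrix ι ι ℂ) := by
      ext i j
      simp only [signMatrix, Matrix.add_apply, diagonal_mul, Matrix.sub_apply, of_apply, one_apply,
        PEquiv.toMatrix_apply, Equiv.toPEquiv_apply, Option.mem_some_iff, c]
      by_cases h : τ i = i
      · have he := (hfix i).1 h
        by_cases hij : i = j
        · subst hij; simp [h, he]; norm_num
        · simp [h, he, hij]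
      · have he : ε i = -1 := (Int.units_eq_one_or _).resolve_left fun h' => h ((hfix i).2 h')
        by_cases hij : i = j
        · subst hij; simp [h, he]
        · by_cases hj : τ i = j
          · have : ¬ j = i := fun h => hij h.symm
            simp [he, hj, hij, this]; ring
          · simp [h, he, hj, hij]
    rw [key, det_mul, det_diagonal, det_permutation]
    refine mul_ne_zero (Finset.prod_ne_zero_iff.2 fun i _ => ?_) ?_
    · simp only [c, s]; split_ifs <;> norm_num
    · rcases Int.units_eq_one_or τ.sign with h | h <;> simp [h]
end Cayley

/-! ### Gluing, and Krull dimension of finitely generated domains -/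

/-- Let the open sets `D(f i)` cover `Spec B`, and let `φ i : B → D` be maps to a domain such that
`φ i` is injective after inverting `f i` and `φ i` does not kill `f i₀`, for all `i` with
`f i ≠ 0`. An element in the kernel of `φ i₀` is killed by a power of `f i₀`, so it is in the
kernel of every such `φ i`; therefore it vanishes on each `D(f i)`, and `φ i₀` is injective. -/
theorem injective_of_cover {B D ι : Type*} [CommRing B] [CommRing D] [IsDomain D]
    (f : ι → B) (hf : Ideal.span (Set.range f) = ⊤) (φ : ι → B →+* D)
    (i₀ : ι) (h₀ : f i₀ ≠ 0)
    (hker : ∀ i, f i ≠ 0 → ∀ b, φ i b = 0 → ∃ k : ℕ, f i ^ k * b = 0)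
    (hne : ∀ i, f i ≠ 0 → φ i (f i₀) ≠ 0) : Function.Injective (φ i₀) := by
  rw [injective_iff_map_eq_zero]
  intro b hb
  obtain ⟨k, hk⟩ := hker i₀ h₀ b hb
  -- `I` is the annihilator of `b`; its radical contains every `f i`.
  let I : Ideal B := LinearMap.ker (LinearMap.toSpanSingleton B B b)
  have hI : ∀ x, x ∈ I ↔ x * b = 0 := fun x => by simp [I]
  have htop : I.radical = ⊤ := by
    rw [eq_top_iff, ← hf, Ideal.span_le]
    rintro _ ⟨i, rfl⟩
    by_cases hi : f i = 0
    · rw [hi]; exact zero_mem _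
    · have hb' : φ i b = 0 := by
        have := congrArg (φ i) hk
        rw [map_mul, map_pow, map_zero] at this
        exact (mul_eq_zero.1 this).resolve_left (pow_ne_zero _ (hne i hi))
      obtain ⟨l, hl⟩ := hker i hi b hb'
      exact ⟨l, (hI _).2 hl⟩
  have h1 : (1 : B) ∈ I := by
    rw [← Ideal.eq_top_iff_one]
    exact Ideal.radical_eq_top.1 htop
  simpa using (hI 1).1 h1

/-- Incomparability gives `≤`, and going up gives `≥`. -/
theorem ringKrullDim_eq_of_isIntegral {R S : Type*} [CommRing R] [CommRing S] [IsDomain R]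
    [Algebra R S] [Algebra.IsIntegral R S] (hinj : Function.Injective (algebraMap R S)) :
    ringKrullDim S = ringKrullDim R := by
  apply le_antisymm
  · exact Order.krullDim_le_of_strictMono (PrimeSpectrum.comap (algebraMap R S))
      fun P Q h => Ideal.IsIntegral.comap_lt_comap h
  · refine iSup_le fun l => ?_
    obtain ⟨P, -, hP, hPl⟩ := Ideal.exists_ideal_over_prime_of_isIntegral l.head.asIdeal
      (⊥ : Ideal S) (by
        rw [← RingHom.ker_eq_comap_bot, (RingHom.injective_iff_ker_eq_bot _).1 hinj]
        exact bot_le)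
    have : P.LiesOver l.head.asIdeal := ⟨hPl.symm⟩
    obtain ⟨L, hL, -⟩ := Ideal.exists_ltSeries_of_hasGoingUp l P
    rw [← hL]
    exact Order.LTSeries.length_le_krullDim L

/-- By Noether normalization, a finitely generated domain `B` is integral over a polynomial ring in
`s` variables; `s` is both the transcendence degree and the Krull dimension of `B`. -/
theorem ringKrullDim_eq_of_trdeg (k : Type) {B : Type} [Field k] [CommRing B] [IsDomain B]
    [Algebra k B] [Algebra.FiniteType k B] (d : ℕ) (hd : Algebra.trdeg k B = d) : ringKrullDim B = d := by
  obtain ⟨s, g, hg, hint⟩ := exists_integral_inj_algHom_of_fg k B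
  algebraize [g.toRingHom]
  have hinj : Function.Injective (algebraMap (MvPolynomial (Fin s) k) B) := hg
  have : FaithfulSMul (MvPolynomial (Fin s) k) B := (faithfulSMul_iff_algebraMap_injective _ _).2 hinj
  have : IsScalarTower k (MvPolynomial (Fin s) k) B := .of_algebraMap_eq' g.comp_algebraMap.symm
  have : Algebra.IsIntegral (MvPolynomial (Fin s) k) B := ⟨hint⟩
  have h := trdeg_add_eq k (MvPolynomial (Fin s) k) (A := B)
  rw [trdeg_eq_zero (R := MvPolynomial (Fin s) k) (A := B), hd, MvPolynomial.trdeg_of_isDomain] at h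
  simp at h
  have h' : s = d := by exact_mod_cast h
  rw [ringKrullDim_eq_of_isIntegral hinj]
  simp [h']

/-! ### Skew-symmetric and symmetric matrices filled with variables -/

section Generic
variable {n : ℕ} {A : Type*} [CommRing A]

/-- `Y` is special orthogonal and `Ξ` is symmetric. Both orthogonality relations are listed, as in the
generators of the ideal, although each implies the other. -/
structure IsPair (Y Ξ : Matrix (Fin n) (Fin n) A) : Prop where
  transpose_mul : Yᵀ * Y = 1
  mul_transpose : Y * Yᵀ = 1
  det : Y.det = 1
  symm : Ξᵀ = Ξ

/-- The skew-symmetric matrix whose entries strictly above the diagonal are those of `z`. -/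
def skewOf (z : Fin n × Fin n → A) : Matrix (Fin n) (Fin n) A :=
  of fun i j => if i < j then z (i, j) else if j < i then -z (j, i) else 0

/-- The symmetric matrix whose entries on and below the diagonal are those of `z`. The entries of `z`
used by `skewOf` are exactly the ones not used here. -/
def symOf (z : Fin n × Fin n → A) : Matrix (Fin n) (Fin n) A :=
  of fun i j => if i < j then z (j, i) else z (i, j)

theorem skewOf_transpose (z : Fin n × Fin n → A) : (skewOf z)ᵀ = -skewOf z := by
  ext i j
  simp only [skewOf, transpose_apply, of_apply, Matrix.neg_apply]
  rcases lt_trichotomy i j with h | h | h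
  · simp [h, h.not_gt]
  · simp [h]
  · simp [h, h.not_gt]

theorem symOf_transpose (z : Fin n × Fin n → A) : (symOf z)ᵀ = symOf z := by
  ext i j
  simp only [symOf, transpose_apply, of_apply]
  rcases lt_trichotomy i j with h | h | h
  · simp [h, h.not_gt]
  · simp [h]
  · simp [h, h.not_gt]

theorem skewOf_map {A' F : Type*} [CommRing A'] [FunLike F A A'] [RingHomClass F A A'] (f : F)
    (z : Fin n × Fin n → A) : (skewOf z).map f = skewOf (fun p => f (z p)) := by
  ext i j
  simp only [skewOf, map_apply, of_apply]
  split_ifs <;> simp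

theorem symOf_map {A' F : Type*} [CommRing A'] [FunLike F A A'] (f : F)
    (z : Fin n × Fin n → A) : (symOf z).map f = symOf (fun p => f (z p)) := by
  ext i j
  simp only [symOf, map_apply, of_apply]
  split_ifs <;> simp

/-- One family `z` parametrizes all pairs of a skew-symmetric and a symmetric matrix. -/
theorem exists_skewOf_symOf (h2 : IsUnit (2 : A)) {S Ξ : Matrix (Fin n) (Fin n) A}
    (hS : Sᵀ = -S) (hΞ : Ξᵀ = Ξ) : ∃ z, skewOf z = S ∧ symOf z = Ξ := by
  have hS' : ∀ i j, S j i = -S i j := fun i j => congrFun (congrFun hS i) j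
  have hΞ' : ∀ i j, Ξ j i = Ξ i j := fun i j => congrFun (congrFun hΞ i) j
  refine ⟨fun p => if p.1 < p.2 then S p.1 p.2 else Ξ p.1 p.2, ?_, ?_⟩
  · ext i j
    simp only [skewOf, of_apply]
    rcases lt_trichotomy i j with h | h | h
    · simp [h]
    · subst h
      have h0 : 2 * S i i = 0 := by linear_combination hS' i i
      simp [(h2.mul_right_eq_zero).1 h0]
    · simp [h, h.not_gt, hS' j i]
  · ext i j
    simp only [symOf, of_apply]
    rcases lt_trichotomy i j with h | h | h
    · simp [h, h.not_gt, hΞ']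
    · simp [h]
    · simp [h.not_gt]

end Generic

theorem isUnit_two_of_algebra (A : Type*) [CommRing A] [Algebra ℂ A] : IsUnit (2 : A) := by
  have : IsUnit (2 : ℂ) := isUnit_iff_ne_zero.2 two_ne_zero
  rw [← map_ofNat (algebraMap ℂ A) 2]
  exact this.map (algebraMap ℂ A)

/-! ### Universal pairs and the Cayley chart -/

/-- The `ℂ`-algebra `B` represents the functor of pairs `IsPair`, with universal pair `(y, ξ)`.
All rings are in `Type`, which is enough for the localizations the property is applied to. -/
structure IsUniversalPair {n : ℕ} {B : Type} [CommRing B] [Algebra ℂ B]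
    (y ξ : Matrix (Fin n) (Fin n) B) : Prop extends IsPair y ξ where
  exists_hom : ∀ {A : Type} [CommRing A] [Algebra ℂ A] (Y Ξ : Matrix (Fin n) (Fin n) A),
    IsPair Y Ξ → ∃ φ : B →ₐ[ℂ] A, y.map φ = Y ∧ ξ.map φ = Ξ
  hom_ext : ∀ {A : Type} [CommRing A] [Algebra ℂ A] (φ ψ : B →ₐ[ℂ] A),
    y.map φ = y.map ψ → ξ.map φ = ξ.map ψ → φ = ψ

/-- The polynomial `det (1 + S)`, for `S` the generic skew-symmetric matrix. -/
noncomputable def cayDet (n : ℕ) : MvPolynomial (Fin n × Fin n) ℂ :=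
  (1 + skewOf (X : Fin n × Fin n → MvPolynomial (Fin n × Fin n) ℂ)).det

theorem map_cayDet {n : ℕ} {A F : Type*} [CommRing A]
    [FunLike F (MvPolynomial (Fin n × Fin n) ℂ) A]
    [RingHomClass F (MvPolynomial (Fin n × Fin n) ℂ) A] (f : F) :
    f (cayDet n) = (1 + skewOf fun p => f (X p)).det := by
  rw [cayDet, map_det_of_ringHomClass, map_one_add, skewOf_map]

theorem aeval_cayDet {n : ℕ} {A : Type*} [CommRing A] [Algebra ℂ A] (z : Fin n × Fin n → A) :
    aeval z (cayDet n) = (1 + skewOf z).det := by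
  simp only [map_cayDet, aeval_X]

theorem cayDet_ne_zero (n : ℕ) : cayDet n ≠ 0 := by
  intro h
  have h1 := aeval_cayDet (n := n) (fun _ => (0 : ℂ))
  rw [h, map_zero, show skewOf (fun _ : Fin n × Fin n => (0 : ℂ)) = 0 by ext i j; simp [skewOf]] at h1
  simp at h1

/-- The target of the Cayley charts: the polynomial ring in `n²` variables with `det (1 + S)`
inverted. -/
abbrev CayRing (n : ℕ) : Type := Localization.Away (cayDet n)

instance (n : ℕ) : IsDomain (CayRing n) := Localization.Away.isDomain (cayDet_ne_zero n)

/-- The variable indexed by `p`, as an element of `CayRing n`. -/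
noncomputable def cayVar (n : ℕ) (p : Fin n × Fin n) : CayRing n :=
  algebraMap (MvPolynomial (Fin n × Fin n) ℂ) _ (X p)

theorem algebraMap_cayDet (n : ℕ) :
    algebraMap _ (CayRing n) (cayDet n) = (1 + skewOf (cayVar n)).det :=
  map_cayDet _

theorem isUnit_cay (n : ℕ) : IsUnit (1 + skewOf (cayVar n)).det := by
  rw [← algebraMap_cayDet]
  exact IsLocalization.Away.algebraMap_isUnit _

/-- The inverse of the Cayley chart belonging to `ε`: the skew-symmetric matrix `S` goes to the special
orthogonal matrix `ε` times the Cayley transform of `S`. -/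
theorem isPair_cay {n : ℕ} {A : Type*} [CommRing A] (z : Fin n × Fin n → A)
    (hz : IsUnit (1 + skewOf z).det) (ε : Fin n → ℤˣ) (hε : ∏ i, ε i = 1) :
    IsPair (signMatrix A ε * cayley (skewOf z)) (symOf z) := by
  have h : (signMatrix A ε * cayley (skewOf z))ᵀ * (signMatrix A ε * cayley (skewOf z)) = 1 := by
    rw [transpose_mul, signMatrix_transpose, Matrix.mul_assoc, ← Matrix.mul_assoc (signMatrix A ε),
      signMatrix_mul_self, Matrix.one_mul, cayley_transpose_mul_self (skewOf_transpose z) hz]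
  refine ⟨h, mul_eq_one_comm.1 h, ?_, symOf_transpose z⟩
  rw [det_mul, det_signMatrix, hε, det_cayley (skewOf_transpose z) hz]
  simp

/-- On the chart belonging to `ε`, where `Y` is `ε` times the Cayley transform of `S`, the function
`det (1 + Y)` does not vanish identically: after clearing the denominator `det (1 + S)` it is a
polynomial in `S` with the nonzero value provided by `exists_skew_det_ne_zero`. -/
theorem det_sign_cay_ne_zero (n : ℕ) (ε : Fin n → ℤˣ) (hε : ∏ i, ε i = 1) :
    (1 + signMatrix (CayRing n) ε * cayley (skewOf (cayVar n))).det ≠ 0 := by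
  obtain ⟨S, hS, hdet⟩ := exists_skew_det_ne_zero ε hε
  obtain ⟨z, rfl, -⟩ := exists_skewOf_symOf (isUnit_two_of_algebra ℂ) hS
    (Ξ := 0) (transpose_zero)
  intro h0
  have h1 : ((1 + skewOf (cayVar n)) +
      signMatrix (CayRing n) ε * (1 - skewOf (cayVar n))).det = 0 := by
    have : ((1 + signMatrix (CayRing n) ε * cayley (skewOf (cayVar n))) *
        (1 + skewOf (cayVar n))).det = 0 := by rw [det_mul, h0, zero_mul]
    rwa [Matrix.add_mul, Matrix.one_mul, Matrix.mul_assoc, cayley_mul (isUnit_cay n)] at this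
  let S₀ := skewOf (X : Fin n × Fin n → MvPolynomial (Fin n × Fin n) ℂ)
  have key : ∀ {A F : Type} [CommRing A] [FunLike F (MvPolynomial (Fin n × Fin n) ℂ) A]
      [RingHomClass F (MvPolynomial (Fin n × Fin n) ℂ) A] (f : F),
      f ((1 + S₀) + signMatrix _ ε * (1 - S₀)).det =
      ((1 + skewOf fun p => f (X p)) + signMatrix _ ε * (1 - skewOf fun p => f (X p))).det := by
    intro A F _ _ _ f
    rw [map_det_of_ringHomClass, Matrix.map_add _ (map_add f), map_one_add, Matrix.map_mul,
      signMatrix_map, Matrix.map_sub _ (map_sub f), Matrix.map_one _ (map_zero f) (map_one f),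
      skewOf_map]
  have h2 : ((1 + S₀) + signMatrix _ ε * (1 - S₀)).det = 0 := by
    apply IsLocalization.injective (CayRing n) (M := Submonoid.powers (cayDet n))
      (powers_le_nonZeroDivisors_of_noZeroDivisors (cayDet_ne_zero n))
    rw [key, map_zero]
    exact h1
  have h3 := key (aeval z : MvPolynomial (Fin n × Fin n) ℂ →ₐ[ℂ] ℂ)
  rw [h2, map_zero] at h3
  simp only [aeval_X] at h3
  exact hdet h3.symm

namespace IsUniversalPair
variable {n : ℕ} {B : Type} [CommRing B] [Algebra ℂ B] {y ξ : Matrix (Fin n) (Fin n) B}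

theorem det_eq_zero (h : IsPair y ξ) (ε : Fin n → ℤˣ) (hε : ∏ i, ε i ≠ 1) :
    (1 + signMatrix B ε * y).det = 0 := by
  refine det_one_add_eq_zero (isUnit_two_of_algebra B) ?_ ?_
  · rw [transpose_mul, signMatrix_transpose, Matrix.mul_assoc, ← Matrix.mul_assoc y,
      h.mul_transpose, Matrix.one_mul, signMatrix_mul_self]
  · rw [det_mul, h.det, det_signMatrix, (Int.units_eq_one_or _).resolve_left hε]
    simp

/-- The chart map `φ` belonging to `ε` is injective after inverting `f = det (1 + ε y)`. Over the
localization `B_f` the Cayley transform of `ε y` is defined, which gives a map `ψ : CayRing n → B_f`;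
since the Cayley transform is an involution, `ψ ∘ φ` is the localization map. -/
theorem exists_pow_mul_eq_zero (h : IsUniversalPair y ξ) (ε : Fin n → ℤˣ)
    (φ : B →ₐ[ℂ] CayRing n) (hφ : y.map φ = signMatrix _ ε * cayley (skewOf (cayVar n)))
    (hφ' : ξ.map φ = symOf (cayVar n)) (b : B) (hb : φ b = 0) :
    ∃ k : ℕ, (1 + signMatrix B ε * y).det ^ k * b = 0 := by
  set f := (1 + signMatrix B ε * y).det with hf
  let L := Localization.Away f
  let ι : B →ₐ[ℂ] L := IsScalarTower.toAlgHom ℂ B L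
  let W : Matrix (Fin n) (Fin n) L := signMatrix L ε * y.map ι
  have hWy : y.map ι = signMatrix L ε * W := by
    simp only [W, ← Matrix.mul_assoc, signMatrix_mul_self, Matrix.one_mul]
  have hW : IsUnit (1 + W).det := by
    have h1 : ι f = (1 + W).det := (map_det_of_ringHomClass ι _).trans <| by
      rw [map_one_add, Matrix.map_mul, signMatrix_map]
    rw [← h1]
    exact IsLocalization.Away.algebraMap_isUnit f
  have hWo : Wᵀ * W = 1 := by
    simp only [W]
    rw [transpose_mul, signMatrix_transpose, Matrix.mul_assoc, ← Matrix.mul_assoc (signMatrix L ε),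
      signMatrix_mul_self, Matrix.one_mul, ← transpose_map, ← Matrix.map_mul, h.transpose_mul,
      Matrix.map_one _ (map_zero ι) (map_one ι)]
  obtain ⟨z, hz, hz'⟩ := exists_skewOf_symOf (isUnit_two_of_algebra L) (cayley_transpose hWo hW)
    (Ξ := ξ.map ι) (by rw [← transpose_map, h.symm])
  have hu : IsUnit (aeval z (cayDet n)) := by
    rw [aeval_cayDet, hz]
    exact isUnit_det_one_add_cayley (isUnit_two_of_algebra L) hW
  let ψ : CayRing n →ₐ[ℂ] L := IsLocalization.liftAlgHom (M := Submonoid.powers (cayDet n))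
    (f := aeval z) (by
      rintro ⟨_, k, rfl⟩
      rw [map_pow]
      exact hu.pow k)
  have hψ : ∀ p, ψ (cayVar n p) = z p := fun p => by
    simp only [ψ, cayVar, IsLocalization.liftAlgHom_apply, IsLocalization.lift_eq]
    exact aeval_X z p
  have hcomp : ψ.comp φ = ι := by
    apply h.hom_ext
    · have : y.map (ψ.comp φ) = (y.map φ).map ψ := by ext; rfl
      rw [this, hφ, Matrix.map_mul, signMatrix_map, cayley_map _ (isUnit_cay n), skewOf_map,
        funext hψ, hz, cayley_cayley (isUnit_two_of_algebra L) hW, hWy]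
    · have : ξ.map (ψ.comp φ) = (ξ.map φ).map ψ := by ext; rfl
      rw [this, hφ', symOf_map, funext hψ, hz']
  have h0 : algebraMap B L b = 0 := by
    have : ψ (φ b) = ι b := DFunLike.congr_fun hcomp b
    rw [hb, map_zero] at this
    exact this.symm
  obtain ⟨⟨_, k, rfl⟩, hk⟩ := (IsLocalization.map_eq_zero_iff (Submonoid.powers f) L b).1 h0
  exact ⟨k, hk⟩

/-- The chart map belonging to the trivial sign matrix is injective on all of `B`. -/
theorem exists_injective (h : IsUniversalPair y ξ) : ∃ φ : B →ₐ[ℂ] CayRing n,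
    Function.Injective φ ∧ y.map φ = cayley (skewOf (cayVar n)) ∧ ξ.map φ = symOf (cayVar n) := by
  have hex : ∀ ε : Fin n → ℤˣ, ∃ φ : B →ₐ[ℂ] CayRing n, ∏ i, ε i = 1 →
      y.map φ = signMatrix _ ε * cayley (skewOf (cayVar n)) ∧ ξ.map φ = symOf (cayVar n) := by
    intro ε
    by_cases hε : ∏ i, ε i = 1
    · obtain ⟨φ, hφ⟩ := h.exists_hom _ _ (isPair_cay (cayVar n) (isUnit_cay n) ε hε)
      exact ⟨φ, fun _ => hφ⟩
    · obtain ⟨φ, -⟩ := h.exists_hom _ _ (isPair_cay (cayVar n) (isUnit_cay n) 1 (by simp))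
      exact ⟨φ, fun h => absurd h hε⟩
  -- For `∏ i, ε i ≠ 1` the map `φ ε` is arbitrary: the corresponding open set is empty.
  choose φ hφ using hex
  have h1 : ∏ i, (1 : Fin n → ℤˣ) i = 1 := by simp
  have hφf : ∀ ε : Fin n → ℤˣ, ∏ i, ε i = 1 → φ ε (1 + signMatrix B 1 * y).det ≠ 0 := by
    intro ε hε
    rw [signMatrix_one, Matrix.one_mul, map_det_of_ringHomClass, map_one_add, (hφ ε hε).1]
    exact det_sign_cay_ne_zero n ε hε
  have hprod : ∀ ε : Fin n → ℤˣ, (1 + signMatrix B ε * y).det ≠ 0 → ∏ i, ε i = 1 := by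
    intro ε hne
    by_contra hε
    exact hne (det_eq_zero h.toIsPair ε hε)
  refine ⟨φ 1, ?_, ?_, (hφ 1 h1).2⟩
  · refine injective_of_cover (fun ε : Fin n → ℤˣ => (1 + signMatrix B ε * y).det) ?_
      (fun ε => (φ ε : B →+* CayRing n)) 1 ?_ ?_ ?_
    · refine Ideal.eq_top_of_isUnit_mem _ (x := 2 ^ Fintype.card (Fin n)) ?_
        ((isUnit_two_of_algebra B).pow _)
      rw [← sum_det_one_add_signMatrix_mul y]
      exact Ideal.sum_mem _ fun ε _ => Ideal.subset_span ⟨ε, rfl⟩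
    · exact fun h0 => hφf 1 h1 (by rw [h0, map_zero])
    · intro ε hne b hb
      have := hφ ε (hprod ε hne)
      exact h.exists_pow_mul_eq_zero ε (φ ε) this.1 this.2 b hb
    · intro ε hne
      exact hφf ε (hprod ε hne)
  · rw [(hφ 1 h1).1, signMatrix_one, Matrix.one_mul]

theorem isDomain (h : IsUniversalPair y ξ) : IsDomain B := by
  obtain ⟨φ, hφ, -⟩ := h.exists_injective
  exact hφ.isDomain (φ : B →+* CayRing n)

end IsUniversalPair

/-! ### Transcendence degree -/

theorem trdeg_cayRing (n : ℕ) : Algebra.trdeg ℂ (CayRing n) = (n ^ 2 : ℕ) := by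
  have : Algebra.IsAlgebraic (MvPolynomial (Fin n × Fin n) ℂ) (CayRing n) :=
    IsLocalization.isAlgebraic _ (Submonoid.powers (cayDet n))
  have hinj := IsLocalization.injective (CayRing n) (M := Submonoid.powers (cayDet n))
      (powers_le_nonZeroDivisors_of_noZeroDivisors (cayDet_ne_zero n))
  have : FaithfulSMul (MvPolynomial (Fin n × Fin n) ℂ) (CayRing n) :=
    (faithfulSMul_iff_algebraMap_injective _ _).2 hinj
  rw [← trdeg_add_eq ℂ (MvPolynomial (Fin n × Fin n) ℂ),
    trdeg_eq_zero (R := MvPolynomial (Fin n × Fin n) ℂ) (A := CayRing n),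
    MvPolynomial.trdeg_of_isDomain]
  simp [sq]

/-- A fraction `x = c / b` is algebraic, being a root of `b X - c`. -/
theorem isAlgebraic_of_mul_eq {B D : Type*} [CommRing B] [CommRing D] [Algebra B D] {x : D}
    {b c : B} (hb : b ≠ 0) (h : x * algebraMap B D b = algebraMap B D c) : IsAlgebraic B x := by
  refine ⟨Polynomial.C b * Polynomial.X - Polynomial.C c, fun h0 => hb ?_, ?_⟩
  · simpa using congrArg (Polynomial.coeff · 1) h0
  · simp only [map_sub, map_mul, Polynomial.aeval_C, Polynomial.aeval_X]
    rw [← h]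
    ring

namespace IsUniversalPair
variable {n : ℕ} {B : Type} [CommRing B] [Algebra ℂ B] {y ξ : Matrix (Fin n) (Fin n) B}

/-- `CayRing n` is algebraic over `B`, embedded by the chart map: the matrix `S` is
`(1 - y) (1 + y)⁻¹`, the remaining variables are entries of `ξ`, and the inverse of `det (1 + S)` is
`2⁻ⁿ det (1 + y)`. -/
theorem trdeg_eq (h : IsUniversalPair y ξ) : Algebra.trdeg ℂ B = (n ^ 2 : ℕ) := by
  have := h.isDomain
  obtain ⟨φ, hinj, hy, hξ⟩ := h.exists_injective
  algebraize [φ.toRingHom]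
  have hal : ∀ b, algebraMap B (CayRing n) b = φ b := fun b => rfl
  have : FaithfulSMul B (CayRing n) := (faithfulSMul_iff_algebraMap_injective _ _).2 hinj
  have : IsScalarTower ℂ B (CayRing n) := .of_algebraMap_eq' φ.comp_algebraMap.symm
  let C := Subalgebra.algebraicClosure B (CayRing n)
  have hC : ∀ b, φ b ∈ C := fun b => C.algebraMap_mem b
  set f := (1 + y).det with hf
  have hφf : φ f * algebraMap _ (CayRing n) (cayDet n) = 2 ^ n := by
    rw [hf, map_det_of_ringHomClass, map_one_add, hy, algebraMap_cayDet,
      det_one_add_cayley (isUnit_cay n), Fintype.card_fin]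
  have hf0 : f ≠ 0 := by
    intro h0
    rw [h0, map_zero, zero_mul] at hφf
    exact ((isUnit_two_of_algebra (CayRing n)).pow n).ne_zero hφf.symm
  have hS : ∀ i j, skewOf (cayVar n) i j ∈ C := by
    intro i j
    refine isAlgebraic_of_mul_eq (c := ((1 - y) * (1 + y).adjugate) i j) hf0 ?_
    have h1 : (skewOf (cayVar n)) * (1 + y.map φ) = 1 - y.map φ := by
      have h2 := cayley_mul (isUnit_det_one_add_cayley (isUnit_two_of_algebra _) (isUnit_cay n))
      rwa [cayley_cayley (isUnit_two_of_algebra _) (isUnit_cay n), ← hy] at h2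
    have h3 : φ f • skewOf (cayVar n) = ((1 - y) * (1 + y).adjugate).map φ := by
      rw [Matrix.map_mul, Matrix.map_sub _ (map_sub φ), Matrix.map_one _ (map_zero φ) (map_one φ),
        ← h1, Matrix.mul_assoc, ← map_one_add, ← Matrix.map_mul, mul_adjugate]
      have h4 : (f • (1 : Matrix (Fin n) (Fin n) B)).map φ = φ f • 1 := by
        ext i j
        by_cases hij : i = j <;> simp [hij]
      rw [h4, Matrix.mul_smul, Matrix.mul_one]
    have := congrFun (congrFun h3 i) j
    simpa [mul_comm, hal] using this
  have hX : ∀ p, cayVar n p ∈ C := by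
    rintro ⟨i, j⟩
    by_cases hij : i < j
    · simpa [skewOf, hij] using hS i j
    · have h1 : φ (ξ i j) = cayVar n (i, j) := by
        have := congrFun (congrFun hξ i) j
        simpa [symOf, hij] using this
      rw [← h1]
      exact hC _
  have hR : ∀ r : MvPolynomial (Fin n × Fin n) ℂ, algebraMap _ (CayRing n) r ∈ C := by
    intro r
    induction r using MvPolynomial.induction_on with
    | C c =>
      have : algebraMap (MvPolynomial (Fin n × Fin n) ℂ) (CayRing n) (MvPolynomial.C c) =
          φ (algebraMap ℂ B c) := by
        rw [φ.commutes, IsScalarTower.algebraMap_apply ℂ (MvPolynomial (Fin n × Fin n) ℂ)]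
        rfl
      rw [this]
      exact hC _
    | add p q hp hq => rw [map_add]; exact C.add_mem hp hq
    | mul_X p i hp => rw [map_mul]; exact C.mul_mem hp (hX i)
  have halg : Algebra.IsAlgebraic B (CayRing n) := by
    refine ⟨fun x => ?_⟩
    obtain ⟨k, r, hr⟩ := IsLocalization.Away.surj (cayDet n) x
    obtain ⟨u, hu⟩ := (isUnit_two_of_algebra B).exists_right_inv
    have hu' : (2 : CayRing n) * φ u = 1 := by
      have := congrArg φ hu
      rwa [map_mul, map_ofNat φ 2, map_one] at this
    have hx : x = algebraMap _ (CayRing n) r * φ (f * u ^ n) ^ k := by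
      rw [← hr, mul_assoc, ← mul_pow, map_mul, map_pow, ← mul_assoc, mul_comm _ (φ f), hφf,
        ← mul_pow, hu', one_pow, one_pow, mul_one]
    rw [hx]
    exact C.mul_mem (hR r) (C.pow_mem (hC _) k)
  rw [← trdeg_cayRing, ← trdeg_add_eq ℂ B (A := CayRing n),
    trdeg_eq_zero (R := B) (A := CayRing n), add_zero]

end IsUniversalPair

/-! ### The quotient ring -/

section Quotient
variable (n : ℕ)

/-- The ideal generated by the equations of the special orthogonal group in the variables `Y` and the
symmetry relations between the variables `Ξ`. -/
noncomputable abbrev soSymIdeal : Ideal (MvPolynomial ((Fin n × Fin n) ⊕ (Fin n × Fin n)) ℂ) :=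
  Ideal.span (orthoGens n ∪ {p | ∃ i j : Fin n, i < j ∧ p = Xv n i j - Xv n j i})

/-- The coordinate ring of the special orthogonal group times the space of symmetric matrices. -/
abbrev SOSymRing : Type :=
  MvPolynomial ((Fin n × Fin n) ⊕ (Fin n × Fin n)) ℂ ⧸ soSymIdeal n

/-- The matrix of the classes of the variables `Y i j`. -/
noncomputable def yMat : Matrix (Fin n) (Fin n) (SOSymRing n) :=
  of fun i j => Ideal.Quotient.mk (soSymIdeal n) (Yv n i j)

/-- The matrix of the classes of the variables `Ξ i j`. -/
noncomputable def xiMat : Matrix (Fin n) (Fin n) (SOSymRing n) :=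
  of fun i j => Ideal.Quotient.mk (soSymIdeal n) (Xv n i j)

variable {n}

theorem eq_of_le_of_transpose_eq {A : Type*} {M N : Matrix (Fin n) (Fin n) A}
    (hM : Mᵀ = M) (hN : Nᵀ = N) (h : ∀ i j, i ≤ j → M i j = N i j) : M = N := by
  ext i j
  rcases le_total i j with hij | hij
  · exact h i j hij
  · rw [← hM, ← hN]
    exact h j i hij

theorem isPair_yMat_xiMat : IsPair (yMat n) (xiMat n) := by
  have hmem : ∀ p ∈ orthoGens n ∪ {p | ∃ i j : Fin n, i < j ∧ p = Xv n i j - Xv n j i},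
      Ideal.Quotient.mk (soSymIdeal n) p = 0 := fun p hp =>
    Ideal.Quotient.eq_zero_iff_mem.2 (Ideal.subset_span hp)
  have hone : ∀ i j : Fin n, Ideal.Quotient.mk (soSymIdeal n) (if i = j then 1 else 0) =
      (1 : Matrix (Fin n) (Fin n) (SOSymRing n)) i j := by
    intro i j
    rw [one_apply]
    split_ifs <;> simp
  refine ⟨?_, ?_, ?_, ?_⟩
  · refine eq_of_le_of_transpose_eq (by simp [transpose_mul]) transpose_one fun i j hij => ?_
    have := hmem _ (Or.inl (Or.inl (Or.inl ⟨i, j, hij, rfl⟩)))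
    rw [map_sub, hone, sub_eq_zero, map_sum] at this
    simpa [Matrix.mul_apply, yMat] using this.symm
  · refine eq_of_le_of_transpose_eq (by simp [transpose_mul]) transpose_one fun i j hij => ?_
    have := hmem _ (Or.inl (Or.inl (Or.inr ⟨i, j, hij, rfl⟩)))
    rw [map_sub, hone, sub_eq_zero, map_sum] at this
    simpa [Matrix.mul_apply, yMat] using this.symm
  · have := hmem _ (Or.inl (Or.inr rfl))
    rw [map_sub, map_one, sub_eq_zero, detYv, map_det_of_ringHomClass] at this
    exact this.symm
  · have h : ∀ i j : Fin n, i < j → xiMat n i j = xiMat n j i := by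
      intro i j hij
      have := hmem _ (Or.inr ⟨i, j, hij, rfl⟩)
      rwa [map_sub, sub_eq_zero] at this
    ext i j
    rw [transpose_apply]
    rcases lt_trichotomy i j with hij | hij | hij
    · exact (h i j hij).symm
    · rw [hij]
    · exact h j i hij

theorem isUniversalPair_yMat_xiMat : IsUniversalPair (yMat n) (xiMat n) where
  toIsPair := isPair_yMat_xiMat
  exists_hom := by
    intro A _ _ Y Ξ h
    let φ₀ : MvPolynomial ((Fin n × Fin n) ⊕ (Fin n × Fin n)) ℂ →ₐ[ℂ] A :=
      aeval (Sum.elim (fun p => Y p.1 p.2) fun p => Ξ p.1 p.2)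
    have hY : ∀ i j, φ₀ (Yv n i j) = Y i j := fun i j => by simp [φ₀, Yv]
    have hX : ∀ i j, φ₀ (Xv n i j) = Ξ i j := fun i j => by simp [φ₀, Xv]
    have hone : ∀ i j : Fin n, φ₀ (if i = j then 1 else 0) = (1 : Matrix (Fin n) (Fin n) A) i j := by
      intro i j
      rw [one_apply]
      split_ifs <;> simp
    have hker : ∀ p ∈ soSymIdeal n, φ₀ p = 0 := by
      intro p hp
      have hle : soSymIdeal n ≤ RingHom.ker φ₀ := by
        rw [Ideal.span_le]
        rintro p (((⟨i, j, -, rfl⟩ | ⟨i, j, -, rfl⟩) | rfl) | ⟨i, j, -, rfl⟩)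
        · have := congrFun (congrFun h.transpose_mul i) j
          simp only [SetLike.mem_coe, RingHom.mem_ker]
          rw [map_sub, hone, ← this, map_sum]
          simp [Matrix.mul_apply, hY]
        · have := congrFun (congrFun h.mul_transpose i) j
          simp only [SetLike.mem_coe, RingHom.mem_ker]
          rw [map_sub, hone, ← this, map_sum]
          simp [Matrix.mul_apply, hY]
        · simp only [SetLike.mem_coe, RingHom.mem_ker]
          rw [map_sub, map_one, detYv, map_det_of_ringHomClass]
          have : (of fun i j : Fin n => Yv n i j).map φ₀ = Y := by ext i j; exact hY i j
          rw [this, h.det, sub_self]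
        · have := congrFun (congrFun h.symm i) j
          simp only [SetLike.mem_coe, RingHom.mem_ker]
          rw [map_sub, hX, hX, ← this, transpose_apply, sub_self]
      exact hle hp
    refine ⟨Ideal.Quotient.liftₐ (soSymIdeal n) φ₀ hker, ?_, ?_⟩
    · ext i j; exact hY i j
    · ext i j; exact hX i j
  hom_ext := by
    intro A _ _ φ ψ hY hX
    apply Ideal.Quotient.algHom_ext
    apply MvPolynomial.algHom_ext
    rintro (⟨i, j⟩ | ⟨i, j⟩)
    · exact congrFun (congrFun hY i) j
    · exact congrFun (congrFun hX i) j

end Quotient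

theorem Jprime_ideal_prime_and_dim (n : ℕ) (hn : 1 ≤ n) :
    let T := MvPolynomial ((Fin n × Fin n) ⊕ (Fin n × Fin n)) ℂ
    let J' : Ideal T := Ideal.span
      (orthoGens n ∪ {p | ∃ i j : Fin n, i < j ∧ p = Xv n i j - Xv n j i})
    J'.IsPrime ∧ ringKrullDim (T ⧸ J') = (n ^ 2 : ℕ) := by
  intro T J'
  have h : IsUniversalPair (yMat n) (xiMat n) := isUniversalPair_yMat_xiMat
  have hdom : IsDomain (SOSymRing n) := h.isDomain
  exact ⟨(Ideal.Quotient.isDomain_iff_prime _).1 hdom, ringKrullDim_eq_of_trdeg ℂ _ h.trdeg_eq⟩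
end

section
/- Let n ≥ 1 and let T = MvPolynomial ((Fin n × Fin n) ⊕ (Fin n × Fin n)) ℂ be the polynomial ring over ℂ in 2n² variables Y_{ij} and Ξ_{ij} (1 ≤ i,j ≤ n). Let J ⊆ T be the ideal generated by: the polynomials δ_{ij} − Σ_{k=1}^n Y_{ki}Y_{kj} and δ_{ij} − Σ_{k=1}^n Y_{ik}Y_{jk} for 1 ≤ i ≤ j ≤ n; the polynomial 1 − det(Y) where det(Y) = Σ_{σ ∈ S_n} sgn(σ) Π_{i=1}^n Y_{iσ(i)}; and the polynomials Σ_{k=1}^n (Y_{ki}Ξ_{kj} − Y_{kj}Ξ_{ki}) for 1 ≤ i < j ≤ n. Then J is a prime ideal of T and the Krull dimension of T/J equals n². -/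
/-!
Write `A = T ⧸ J`, with its generic matrices `Y` and `Ξ`. The relations say that `Y` is orthogonal
of determinant `1` and that `S = Yᵀ Ξ` is symmetric, so that `Ξ = Y S`: the variety of `J` is the
product of `SO(n, ℂ)` with the symmetric matrices. Geometrically it is smooth, irreducible and of
dimension `n(n-1)/2 + n(n+1)/2 = n²`. The proof makes this algebraic, and scheme theoretic from the
start, by means of Cayley charts.

For a diagonal sign matrix `E` with `det E = 1`, put `f_E = det (1 + E Y)`. Where `f_E` is
invertible, `E Y` is the Cayley transform `(1 - K) (1 + K)⁻¹` of a skew-symmetric matrix `K`, and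
conversely. The pair formed by the skew-symmetric `K` and the symmetric `S` is the same thing as a
single arbitrary matrix `M`, through `K = M - Mᵀ`, `S = M + Mᵀ`. Hence the localization of `A` at
`f_E` is the polynomial ring in the `n²` entries of `M`, localized at `det (1 + M - Mᵀ)`
(`chartEquiv`). It is a domain of dimension `n²` (`ringKrullDim_chartRing`).

The charts cover: summing `det (1 + E Y)` over all `2 ^ n` sign matrices gives the constant `2 ^ n`
(`sum_det_one_add_signMat`), and the terms with `det E = -1` vanish in `A`, because an orthogonal
matrix without eigenvalue `-1` has determinant `1` (`det_one_add_orth`). So the `f_E` generate the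
unit ideal (`span_chartFun`), and the dimension of `A` is `n²` (`ringKrullDim_of_cover`).

Any two charts meet: two sign matrices of determinant `1` differ in an even number of places, and a
rotation by a quarter turn in these coordinates gives a point of `SO(n, ℂ)` in both charts
(`exists_common_point`). A ring covered by domains in which any two charts meet is a domain
(`isDomain_of_cover`), so `J` is prime.
-/

open MvPolynomial

/-! ### Domains and Krull dimension along a cover by localizations -/

/-- Irreducibility criterion: if `D(f i)` cover `Spec R`, each map `g i` to the domain `L` is injective
after inverting `f i`, and any two of the opens `D(f i)` share a complex point, then `R` is a domain. -/
theorem isDomain_of_cover {R L ι : Type*} [CommRing R] [Nontrivial R] [CommRing L] [IsDomain L]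
    (f : ι → R) (hspan : Ideal.span (Set.range f) = ⊤) (g : ι → R →+* L)
    (hker : ∀ i a, g i a = 0 → ∃ k : ℕ, f i ^ k * a = 0)
    (hpt : ∀ i j, ∃ χ : R →+* ℂ, χ (f i) ≠ 0 ∧ χ (f j) ≠ 0) : IsDomain R := by
  have hne : ∀ i j, g j (f i) ≠ 0 := by
    intro i j h
    obtain ⟨k, hk⟩ := hker j _ h
    obtain ⟨χ, h1, h2⟩ := hpt i j
    have := congrArg χ hk
    simp [h1, h2] at this
  -- An element vanishing on one chart vanishes on all of them, since the charts meet, and is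
  -- therefore killed by a power of every `f j`; these powers generate the unit ideal.
  have hprop : ∀ i a, g i a = 0 → a = 0 := by
    intro i a ha
    obtain ⟨k, hk⟩ := hker i a ha
    have hall : ∀ j, g j a = 0 := by
      intro j
      have := congrArg (g j) hk
      simpa [hne i j] using this
    choose m hm using fun j => hker j a (hall j)
    have hrad : Ideal.span (Set.range f) ≤ (Ideal.span {a}).annihilator.radical := by
      rw [Ideal.span_le]
      rintro _ ⟨j, rfl⟩
      exact ⟨m j, by rw [Submodule.mem_annihilator_span_singleton]; exact hm j⟩
    rw [hspan, top_le_iff, Ideal.radical_eq_top] at hrad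
    have h1 : (1 : R) ∈ (Ideal.span {a}).annihilator := by rw [hrad]; trivial
    rw [Submodule.mem_annihilator_span_singleton] at h1
    simpa using h1
  have : NoZeroDivisors R := by
    refine ⟨fun {a b} hab => ?_⟩
    have hne' : Nonempty ι := by
      by_contra h
      rw [not_nonempty_iff] at h
      rw [Set.range_eq_empty, Ideal.span_empty] at hspan
      exact bot_ne_top hspan
    obtain ⟨i⟩ := hne'
    have h := congrArg (g i) hab
    rw [map_mul, map_zero, mul_eq_zero] at h
    exact h.imp (hprop i a) (hprop i b)
  exact NoZeroDivisors.to_isDomain R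

theorem ringKrullDim_localization_le {R S : Type*} [CommRing R] [CommRing S] [Algebra R S]
    (M : Submonoid R) [IsLocalization M S] : ringKrullDim S ≤ ringKrullDim R := by
  rw [ringKrullDim_le_iff_height_le]
  intro p hp
  rw [← IsLocalization.height_under M p]
  exact Ideal.height_le_ringKrullDim_of_ne_top (Ideal.IsPrime.under R p).ne_top

/-- Krull dimension is local: every prime of `R` survives, with its height, in some localization at
`f i`. -/
theorem ringKrullDim_of_cover {R ι : Type*} [CommRing R] [Nonempty ι] (f : ι → R)
    (hspan : Ideal.span (Set.range f) = ⊤) (d : WithBot ℕ∞)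
    (hd : ∀ i, ringKrullDim (Localization.Away (f i)) = d) : ringKrullDim R = d := by
  apply le_antisymm
  · rw [ringKrullDim_le_iff_height_le]
    intro p hp
    obtain ⟨i, hi⟩ : ∃ i, f i ∉ p := by
      by_contra! h
      apply hp.ne_top
      rw [← top_le_iff, ← hspan, Ideal.span_le]
      rintro _ ⟨j, rfl⟩
      exact h j
    have hdis : Disjoint (Submonoid.powers (f i) : Set R) (p : Set R) := by
      rwa [← Ideal.disjoint_powers_iff_notMem] at hi
      exact hp.isRadical
    rw [← hd i, ← IsLocalization.height_map_of_disjoint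
      (S := Localization.Away (f i)) (Submonoid.powers (f i)) p hdis]
    have := IsLocalization.isPrime_of_isPrime_disjoint (Submonoid.powers (f i))
      (Localization.Away (f i)) p hp hdis
    exact Ideal.height_le_ringKrullDim_of_ne_top this.ne_top
  · obtain ⟨i⟩ := ‹Nonempty ι›
    rw [← hd i]
    exact ringKrullDim_localization_le (Submonoid.powers (f i))

/-- The maximal ideal of the origin in affine space has maximal height. Some maximal ideal has height
equal to the dimension; by the Nullstellensatz it is the ideal of a point, and a translation moves
this point to the origin. -/
theorem height_ker_eval_zero {σ : Type*} [Finite σ] :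
    (RingHom.ker (aeval (R := ℂ) (fun _ : σ => (0 : ℂ)))).height = Nat.card σ := by
  have hdim : ringKrullDim (MvPolynomial σ ℂ) = Nat.card σ := by
    rw [MvPolynomial.ringKrullDim_of_isNoetherianRing]; simp
  have : FiniteRingKrullDim (MvPolynomial σ ℂ) := by
    rw [finiteRingKrullDim_iff_ne_bot_and_top, hdim]
    exact ⟨WithBot.natCast_ne_bot _, fun h => ENat.natCast_ne_top _ (WithBot.coe_injective h)⟩
  obtain ⟨p, hp, hph⟩ := Ideal.exists_isMaximal_height (R := MvPolynomial σ ℂ)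
  obtain ⟨a, rfl⟩ := (MvPolynomial.isMaximal_iff_eq_vanishingIdeal_singleton (K := ℂ)).1 hp
  let e : MvPolynomial σ ℂ ≃ₐ[ℂ] MvPolynomial σ ℂ := AlgEquiv.ofAlgHom
    (aeval fun i => X i - C (a i)) (aeval fun i => X i + C (a i))
    (by ext i; simp) (by ext i; simp)
  have hcomap : (MvPolynomial.vanishingIdeal ℂ {a}).comap e.toRingEquiv =
      RingHom.ker (aeval (R := ℂ) (fun _ : σ => (0 : ℂ))) := by
    have h : (aeval (R := ℂ) a).comp e.toAlgHom =
        aeval (R := ℂ) (fun _ : σ => (0 : ℂ)) := by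
      ext i; simp [e]
    ext q
    rw [Ideal.mem_comap, MvPolynomial.mem_vanishingIdeal_singleton_iff, RingHom.mem_ker, ← h]
    rfl
  rw [← hcomap, RingEquiv.height_comap]
  rw [hdim] at hph
  exact_mod_cast hph

/-- Inverting a polynomial that does not vanish at the origin leaves the dimension of affine space
unchanged, because the maximal ideal of the origin survives. -/
theorem ringKrullDim_away {σ : Type*} [Finite σ] (f : MvPolynomial σ ℂ)
    (hf : aeval (fun _ => (0 : ℂ)) f ≠ 0) :
    ringKrullDim (Localization.Away f) = Nat.card σ := by
  apply le_antisymm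
  · refine (ringKrullDim_localization_le (Submonoid.powers f)).trans ?_
    rw [MvPolynomial.ringKrullDim_of_isNoetherianRing]
    simp
  · set m := RingHom.ker (aeval (R := ℂ) (fun _ : σ => (0 : ℂ))) with hm
    have hp : m.IsPrime := RingHom.ker_isPrime _
    have hdis : Disjoint (Submonoid.powers f : Set (MvPolynomial σ ℂ)) (m : Set _) := by
      rw [Ideal.disjoint_powers_iff_notMem]
      · simpa [hm] using hf
      · exact hp.isRadical
    have h2 := IsLocalization.isPrime_of_isPrime_disjoint (Submonoid.powers f)
      (Localization.Away f) m hp hdis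
    have h3 := Ideal.height_le_ringKrullDim_of_ne_top h2.ne_top
    rw [IsLocalization.height_map_of_disjoint (Submonoid.powers f) m hdis,
      height_ker_eval_zero] at h3
    exact_mod_cast h3

open Matrix

/-! ### Sign matrices and determinants -/

/-- An orthogonal matrix `W` for which `det (1 + W)` is a nonzero divisor has determinant `1`; this
is the form of that fact which holds over every commutative ring. It comes from
`1 + W = W (1 + W)ᵀ`. -/
theorem det_one_add_orth {n : ℕ} {S : Type*} [CommRing S] {W : Matrix (Fin n) (Fin n) S}
    (h : W * Wᵀ = 1) : (1 + W).det = W.det * (1 + W).det := by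
  have h1 : 1 + W = W * (1 + W)ᵀ := by
    rw [transpose_add, transpose_one, mul_add, h, mul_one, add_comm]
  conv_lhs => rw [h1, det_mul, det_transpose]

/-- The diagonal matrix over `S` with diagonal entries the signs `ε i`. -/
def signMat {n : ℕ} (S : Type*) [CommRing S] (ε : Fin n → ℤˣ) : Matrix (Fin n) (Fin n) S :=
  diagonal fun i => ((ε i : ℤ) : S)

section signMat
variable {n : ℕ} {S : Type*} [CommRing S] (ε : Fin n → ℤˣ)

theorem signMat_mul_self : signMat S ε * signMat S ε = 1 := by
  rw [signMat, diagonal_mul_diagonal, ← diagonal_one]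
  congr 1
  ext i
  rw [← Int.cast_mul, ← Units.val_mul, Int.units_mul_self]
  simp

theorem signMat_transpose : (signMat S ε)ᵀ = signMat S ε := diagonal_transpose _

theorem signMat_map {S' : Type*} [CommRing S'] (φ : S →+* S') :
    φ.mapMatrix (signMat S ε) = signMat S' ε := by
  simp [signMat, RingHom.mapMatrix_apply, diagonal_map]

theorem det_signMat : (signMat S ε).det = (((∏ i, ε i : ℤˣ) : ℤ) : S) := by
  simp [signMat, det_diagonal]

/-- In the Leibniz expansion of `det (1 + E Y)` the `i`-th sign occurs only in the `i`-th factor, so the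
sum over all sign vectors factors, and each factor sums to an entry of the matrix `2`. -/
theorem sum_det_one_add_signMat (Y : Matrix (Fin n) (Fin n) S) :
    ∑ ε : Fin n → ℤˣ, (1 + signMat S ε * Y).det = 2 ^ n := by
  have key : ∀ ε : Fin n → ℤˣ, (1 + signMat S ε * Y).det =
      ∑ σ : Equiv.Perm (Fin n), Equiv.Perm.sign σ • ∏ i,
        ((1 : Matrix (Fin n) (Fin n) S) i (σ i) + ((ε i : ℤ) : S) * Y i (σ i)) := by
    intro ε
    rw [← det_transpose, det_apply]
    simp [signMat, diagonal_mul]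
  have h2 : ((2 : S) • (1 : Matrix (Fin n) (Fin n) S)).det = 2 ^ n := by
    rw [det_smul]; simp
  rw [Finset.sum_congr rfl fun ε _ => key ε, Finset.sum_comm, ← h2, ← det_transpose, det_apply]
  refine Finset.sum_congr rfl fun σ _ => ?_
  rw [← Finset.smul_sum]
  congr 1
  have := Finset.prod_univ_sum (fun _ : Fin n => (Finset.univ : Finset ℤˣ))
    (fun i (e : ℤˣ) => (1 : Matrix (Fin n) (Fin n) S) i (σ i) + ((e : ℤ) : S) * Y i (σ i))
  rw [Fintype.piFinset_univ] at this
  rw [← this]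
  refine Finset.prod_congr rfl fun i _ => ?_
  rw [show (Finset.univ : Finset ℤˣ) = {1, -1} from rfl, Finset.sum_pair (by decide)]
  simp
  ring

end signMat

/-! ### A common point of two Cayley charts -/

/-- On the coordinate subspace indexed by a set `s` of even size there is a skew-symmetric complex
structure; it is extended by zero. The diagonal matrix in the statement is the projection onto the
complementary coordinates. -/
theorem exists_partial_J {n : ℕ} (s : Finset (Fin n)) (hs : Even s.card) :
    ∃ A : Matrix (Fin n) (Fin n) ℂ, Aᵀ = -A ∧
      A * A = diagonal (fun i => if i ∈ s then (0 : ℂ) else 1) - 1 ∧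
      diagonal (fun i => if i ∈ s then (0 : ℂ) else 1) * A = 0 := by
  obtain ⟨m, hm⟩ := hs
  have e : (Fin m ⊕ Fin m) ≃ s := Fintype.equivOfCardEq (by simp [hm])
  -- `Bᵀ` is the inclusion of the coordinates in `s`, so `Bᵀ * J * B` is the structure wanted.
  set B : Matrix (Fin m ⊕ Fin m) (Fin n) ℂ := of fun a i => if (e a : Fin n) = i then 1 else 0
    with hB
  set p : Matrix (Fin n) (Fin n) ℂ := diagonal (fun i => if i ∈ s then (0 : ℂ) else 1) with hp
  have h1 : B * Bᵀ = 1 := by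
    ext a b
    simp [hB, mul_apply, one_apply, eq_comm]
  have h2 : Bᵀ * B = 1 - p := by
    ext i j
    simp only [hB, hp, mul_apply, transpose_apply, of_apply, Matrix.sub_apply, one_apply, diagonal_apply]
    rw [Equiv.sum_comp e (fun x : s => (if (x : Fin n) = i then (1 : ℂ) else 0) *
      (if (x : Fin n) = j then 1 else 0))]
    rw [Finset.sum_coe_sort s (fun x => (if x = i then (1 : ℂ) else 0) *
      (if x = j then 1 else 0))]
    by_cases hi : i ∈ s <;> by_cases hij : i = j <;> simp [hij] <;> aesop
  have h3 : p * Bᵀ = 0 := by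
    ext i a
    simp only [hB, hp, diagonal_mul, transpose_apply, of_apply, Matrix.zero_apply]
    by_cases h : (e a : Fin n) = i
    · have : i ∈ s := h ▸ (e a).2
      simp [this]
    · simp [h]
  refine ⟨Bᵀ * J (Fin m) ℂ * B, ?_, ?_, ?_⟩
  · simp [transpose_mul, Matrix.mul_assoc]
  · calc Bᵀ * J (Fin m) ℂ * B * (Bᵀ * J (Fin m) ℂ * B)
        = Bᵀ * J (Fin m) ℂ * (B * Bᵀ) * J (Fin m) ℂ * B := by simp only [Matrix.mul_assoc]
      _ = Bᵀ * (J (Fin m) ℂ * J (Fin m) ℂ) * B := by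
        rw [h1]; simp only [Matrix.mul_assoc, Matrix.one_mul]
      _ = p - 1 := by rw [J_squared]; simp [h2]
  · rw [← Matrix.mul_assoc, ← Matrix.mul_assoc, h3]; simp

/-- Any two Cayley charts meet in a complex point of `SO(n)`. With `s` the set where the two sign
vectors differ, the point is `E (p + A)`, where `p` is the projection off `s` and `A` is the
quarter turn on `s`: neither `1` nor `-1` is an eigenvalue of `A` on the coordinates in `s`. -/
theorem exists_common_point {n : ℕ} (ε ε' : Fin n → ℤˣ) (h : ∏ i, ε i = 1) (h' : ∏ i, ε' i = 1) :
    ∃ Y : Matrix (Fin n) (Fin n) ℂ, Y * Yᵀ = 1 ∧ Y.det = 1 ∧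
      (1 + signMat ℂ ε * Y).det ≠ 0 ∧ (1 + signMat ℂ ε' * Y).det ≠ 0 := by
  set s : Finset (Fin n) := Finset.univ.filter fun i => ε i ≠ ε' i with hs
  have hval : ∀ i, ε i * ε' i = if i ∈ s then -1 else 1 := by
    intro i
    simp only [hs, Finset.mem_filter, Finset.mem_univ, true_and]
    rcases Int.units_eq_one_or (ε i) with h1 | h1 <;>
    rcases Int.units_eq_one_or (ε' i) with h2 | h2 <;> rw [h1, h2] <;> decide
  have heven : Even s.card := by
    have h1 : ∏ i, ε i * ε' i = 1 := by rw [Finset.prod_mul_distrib, h, h', one_mul]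
    rw [Finset.prod_congr rfl fun i _ => hval i, Finset.prod_ite] at h1
    simp only [Finset.prod_const, one_pow, mul_one, Finset.filter_mem_eq_inter,
      Finset.univ_inter] at h1
    rcases Nat.even_or_odd s.card with h2 | h2
    · exact h2
    · rw [h2.neg_one_pow] at h1
      exact absurd h1 (by decide)
  obtain ⟨A, hA1, hA2, hA3⟩ := exists_partial_J s heven
  set p : Matrix (Fin n) (Fin n) ℂ := diagonal (fun i => if i ∈ s then (0 : ℂ) else 1) with hp
  have hpp : p * p = p := by
    rw [hp, diagonal_mul_diagonal]; congr 1; ext i; split_ifs <;> simp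
  have hpt : pᵀ = p := diagonal_transpose _
  have hA4 : A * p = 0 := by
    have := congrArg transpose hA3
    rw [transpose_mul, hA1, hpt] at this
    simpa using this
  have hF : signMat ℂ ε' * signMat ℂ ε = 2 * p - 1 := by
    rw [signMat, signMat, diagonal_mul_diagonal, hp]
    ext i j
    have := hval i
    rw [mul_comm] at this
    rw [two_mul]
    by_cases hij : i = j
    · subst hij
      simp only [diagonal_apply_eq, Matrix.sub_apply, Matrix.add_apply, one_apply_eq, ← Int.cast_mul,
        ← Units.val_mul, this]
      by_cases hi : i ∈ s <;> norm_num [hi]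
    · simp [hij]
  have hZ : (p + A) * (p + A)ᵀ = 1 := by
    rw [transpose_add, hpt, hA1]
    calc (p + A) * (p + -A) = p * p - p * A + A * p - A * A := by noncomm_ring
      _ = 1 := by rw [hpp, hA2, hA3, hA4]; simp
  -- `2 + 2 p` is invertible; it will be a multiple of both `1 + p + A` and `2 p - 1 + p + A`.
  have hu : (2 + 2 * p) * (1 - (1/2 : ℂ) • p) = 2 := by
    have : (2 + 2 * p) * (1 - (1/2 : ℂ) • p) = 2 + 2 * p - (1/2 : ℂ) • (2 * p)
       - (1/2 : ℂ) • (2 * (p * p)) := by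
      rw [mul_sub, mul_one, mul_smul_comm, add_mul, smul_add, Matrix.mul_assoc]
      abel
    rw [this, hpp]
    module
  have hunit : ∀ X X' : Matrix (Fin n) (Fin n) ℂ, X * X' = 2 + 2 * p → X.det ≠ 0 := by
    intro X X' hX h0
    have h2 : (2 : Matrix (Fin n) (Fin n) ℂ).det ≠ 0 := by
      have : (2 : Matrix (Fin n) (Fin n) ℂ) = (2 : ℂ) • 1 := by rw [← one_add_one_eq_two, two_smul]
      rw [this, det_smul]; simp
    apply h2
    rw [← hu, ← hX, det_mul, det_mul, h0]; simp
  have hd1 : (1 + (p + A)).det ≠ 0 := by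
    apply hunit _ (1 + p - A)
    calc (1 + (p + A)) * (1 + p - A) = 1 + 2 * p + p * p - p * A + A * p - A * A := by noncomm_ring
      _ = _ := by rw [hpp, hA2, hA3, hA4, ← one_add_one_eq_two]; noncomm_ring
  have hd2 : (2 * p - 1 + (p + A)).det ≠ 0 := by
    apply hunit _ (3 * p - 1 - A)
    calc (2 * p - 1 + (p + A)) * (3 * p - 1 - A)
        = 9 * (p * p) - 6 * p + 1 - 3 * (p * A) + 3 * (A * p) - A * A := by noncomm_ring
      _ = _ := by
        rw [hpp, hA2, hA3, hA4, show (2 : Matrix (Fin n) (Fin n) ℂ) + 2 * p = 1 + 1 + 2 * p by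
          rw [one_add_one_eq_two]]
        noncomm_ring
  have hdet : (p + A).det = 1 := by
    have := det_one_add_orth hZ
    exact (mul_right_cancel₀ hd1 (by rw [one_mul]; exact this)).symm
  refine ⟨signMat ℂ ε * (p + A), ?_, ?_, ?_, ?_⟩
  · rw [transpose_mul, signMat_transpose, Matrix.mul_assoc, ← Matrix.mul_assoc (p + A), hZ,
      Matrix.one_mul, signMat_mul_self]
  · rw [det_mul, det_signMat, h, hdet]; simp
  · rw [← Matrix.mul_assoc, signMat_mul_self, Matrix.one_mul]; exact hd1
  · have h5 : 1 + signMat ℂ ε' * (signMat ℂ ε * (p + A)) =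
        (2 * p - 1) * (2 * p - 1 + (p + A)) := by
      rw [← Matrix.mul_assoc, hF]
      calc _ = 1 + (2 * p - 1) * (p + A) := rfl
        _ = (4 * p - 4 * p + 1) + (2 * p - 1) * (p + A) := by simp
        _ = (4 * (p * p) - 4 * p + 1) + (2 * p - 1) * (p + A) := by rw [hpp]
        _ = _ := by noncomm_ring
    rw [h5, det_mul, ← hF, det_mul, det_signMat, det_signMat, h, h']
    rw [hF]
    simpa using hd2

/-! ### The characteristic ideal and its quotient ring -/

/-- The characteristic ideal `J`. -/
noncomputable def charIdeal (n : ℕ) : Ideal (MvPolynomial ((Fin n × Fin n) ⊕ (Fin n × Fin n)) ℂ) :=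
  Ideal.span (orthoGens n ∪
    {p | ∃ i j : Fin n, i < j ∧ p = ∑ k, (Yv n k i * Xv n k j - Yv n k j * Xv n k i)})

/-- The quotient ring `T ⧸ J`, the coordinate ring of the characteristic variety. -/
abbrev CharRing (n : ℕ) : Type :=
  MvPolynomial ((Fin n × Fin n) ⊕ (Fin n × Fin n)) ℂ ⧸ charIdeal n

/-- The image of the generic matrix `Y` in `CharRing n`. -/
noncomputable def genY (n : ℕ) : Matrix (Fin n) (Fin n) (CharRing n) :=
  of fun i j => Ideal.Quotient.mk (charIdeal n) (Yv n i j)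

/-- The image of the generic matrix `Ξ` in `CharRing n`. -/
noncomputable def genXi (n : ℕ) : Matrix (Fin n) (Fin n) (CharRing n) :=
  of fun i j => Ideal.Quotient.mk (charIdeal n) (Xv n i j)

theorem genY_transpose_mul (n : ℕ) : (genY n)ᵀ * genY n = 1 := by
  have key : ∀ i j : Fin n, i ≤ j → ((genY n)ᵀ * genY n) i j = (1 : Matrix _ _ _) i j := by
    intro i j hij
    have : (if i = j then 1 else 0) - ∑ k, Yv n k i * Yv n k j ∈ charIdeal n :=
      Ideal.subset_span (Or.inl (Or.inl (Or.inl ⟨i, j, hij, rfl⟩)))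
    rw [← Ideal.Quotient.eq_zero_iff_mem, map_sub, sub_eq_zero] at this
    rw [mul_apply, one_apply]
    simp only [genY, transpose_apply, of_apply, ← map_mul, ← map_sum]
    rw [← this]
    split_ifs <;> simp
  have hs : ((genY n)ᵀ * genY n)ᵀ = (genY n)ᵀ * genY n := by simp [transpose_mul]
  ext i j
  rcases le_total i j with h | h
  · exact key i j h
  · rw [← hs, transpose_apply, key j i h, one_apply, one_apply]
    simp [eq_comm]

theorem genY_mul_transpose (n : ℕ) : genY n * (genY n)ᵀ = 1 :=
  mul_eq_one_comm.1 (genY_transpose_mul n)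

theorem det_genY (n : ℕ) : (genY n).det = 1 := by
  have : 1 - detYv n ∈ charIdeal n := Ideal.subset_span (Or.inl (Or.inr rfl))
  rw [← Ideal.Quotient.eq_zero_iff_mem, map_sub, sub_eq_zero, map_one, detYv, RingHom.map_det]
    at this
  rw [this]
  rfl

theorem genY_genXi_symm (n : ℕ) : ((genY n)ᵀ * genXi n)ᵀ = (genY n)ᵀ * genXi n := by
  have key : ∀ i j : Fin n, i < j →
      ((genY n)ᵀ * genXi n) i j = ((genY n)ᵀ * genXi n) j i := by
    intro i j hij
    have : ∑ k, (Yv n k i * Xv n k j - Yv n k j * Xv n k i) ∈ charIdeal n :=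
      Ideal.subset_span (Or.inr ⟨i, j, hij, rfl⟩)
    rw [← Ideal.Quotient.eq_zero_iff_mem, Finset.sum_sub_distrib, map_sub, sub_eq_zero] at this
    simpa [mul_apply, genY, genXi] using this
  ext i j
  rw [transpose_apply]
  rcases lt_trichotomy i j with h | h | h
  · exact (key i j h).symm
  · rw [h]
  · exact key j i h

section lift
variable {n : ℕ} {S : Type*} [CommRing S] [Algebra ℂ S]

/-- The `ℂ`-algebra homomorphism evaluating the two families of variables at matrices `Y`, `Ξ`. -/
noncomputable def evalMat (Y Ξ : Matrix (Fin n) (Fin n) S) :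
    MvPolynomial ((Fin n × Fin n) ⊕ (Fin n × Fin n)) ℂ →ₐ[ℂ] S :=
  aeval (Sum.elim (fun q => Y q.1 q.2) (fun q => Ξ q.1 q.2))

theorem evalMat_Yv (Y Ξ : Matrix (Fin n) (Fin n) S) (i j : Fin n) :
    evalMat Y Ξ (Yv n i j) = Y i j := by simp [evalMat, Yv]

theorem evalMat_Xv (Y Ξ : Matrix (Fin n) (Fin n) S) (i j : Fin n) :
    evalMat Y Ξ (Xv n i j) = Ξ i j := by simp [evalMat, Xv]

theorem charIdeal_le_ker (Y Ξ : Matrix (Fin n) (Fin n) S) (h1 : Yᵀ * Y = 1) (h2 : Y.det = 1)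
    (h3 : (Yᵀ * Ξ)ᵀ = Yᵀ * Ξ) : charIdeal n ≤ RingHom.ker (evalMat Y Ξ) := by
  rw [charIdeal, Ideal.span_le]
  have h1' : Y * Yᵀ = 1 := mul_eq_one_comm.1 h1
  rintro _ (((⟨i, j, -, rfl⟩ | ⟨i, j, -, rfl⟩) | rfl) | ⟨i, j, -, rfl⟩) <;>
    rw [SetLike.mem_coe, RingHom.mem_ker]
  · have := congrFun (congrFun h1 i) j
    simp only [mul_apply, one_apply, transpose_apply] at this
    rw [map_sub, sub_eq_zero]
    simp only [map_sum, map_mul, evalMat_Yv, this]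
    split_ifs <;> simp
  · have := congrFun (congrFun h1' i) j
    simp only [mul_apply, one_apply, transpose_apply] at this
    rw [map_sub, sub_eq_zero]
    simp only [map_sum, map_mul, evalMat_Yv, this]
    split_ifs <;> simp
  · rw [map_sub, sub_eq_zero, map_one, detYv, AlgHom.map_det, ← h2]
    congr 1
    ext i j
    exact (evalMat_Yv Y Ξ i j).symm
  · have := congrFun (congrFun h3 j) i
    simp only [mul_apply, transpose_apply] at this
    simp only [map_sum, map_sub, map_mul, evalMat_Yv, evalMat_Xv]
    rw [Finset.sum_sub_distrib, sub_eq_zero]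
    exact this

/-- The universal property of `CharRing n`: a special orthogonal matrix `Y` over `S` and a matrix
`Ξ` with `Yᵀ Ξ` symmetric define a `ℂ`-algebra homomorphism to `S`. -/
noncomputable def charLift (Y Ξ : Matrix (Fin n) (Fin n) S) (h1 : Yᵀ * Y = 1) (h2 : Y.det = 1)
    (h3 : (Yᵀ * Ξ)ᵀ = Yᵀ * Ξ) : CharRing n →ₐ[ℂ] S :=
  Ideal.Quotient.liftₐ (charIdeal n) (evalMat Y Ξ) (charIdeal_le_ker Y Ξ h1 h2 h3)

variable (Y Ξ : Matrix (Fin n) (Fin n) S) (h1 : Yᵀ * Y = 1) (h2 : Y.det = 1)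
    (h3 : (Yᵀ * Ξ)ᵀ = Yᵀ * Ξ)

theorem charLift_genY : (charLift Y Ξ h1 h2 h3).toRingHom.mapMatrix (genY n) = Y := by
  ext i j
  exact evalMat_Yv Y Ξ i j

theorem charLift_genXi : (charLift Y Ξ h1 h2 h3).toRingHom.mapMatrix (genXi n) = Ξ := by
  ext i j
  exact evalMat_Xv Y Ξ i j

end lift

/-! ### The Cayley transform -/

section Cayley
variable {n : ℕ} {S : Type*} [CommRing S]

/-- The Cayley transform of a skew-symmetric `A`, twisted by a symmetric involution `E`, is orthogonal. -/
theorem cayley_orth {A B E : Matrix (Fin n) (Fin n) S} (hA : Aᵀ = -A) (hB : (1 + A) * B = 1)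
    (hE : Eᵀ = E) (hEE : E * E = 1) : (E * (1 - A) * B)ᵀ * (E * (1 - A) * B) = 1 := by
  have h1 : Bᵀ * (1 - A) = 1 := by
    have := congrArg transpose hB
    rwa [transpose_mul, transpose_add, transpose_one, hA, ← sub_eq_add_neg] at this
  calc (E * (1 - A) * B)ᵀ * (E * (1 - A) * B)
      = Bᵀ * (1 + A) * (E * E) * (1 - A) * B := by
        rw [transpose_mul, transpose_mul, hE, transpose_sub, transpose_one, hA, sub_neg_eq_add]
        simp only [Matrix.mul_assoc]
    _ = Bᵀ * ((1 + A) * (1 - A)) * B := by rw [hEE, Matrix.mul_one]; simp only [Matrix.mul_assoc]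
    _ = Bᵀ * ((1 - A) * (1 + A)) * B := by congr 2; noncomm_ring
    _ = (Bᵀ * (1 - A)) * ((1 + A) * B) := by simp only [Matrix.mul_assoc]
    _ = 1 := by rw [h1, hB, Matrix.one_mul]

theorem cayley_det {A B E : Matrix (Fin n) (Fin n) S} (hA : Aᵀ = -A) (hB : (1 + A) * B = 1)
    (hE : E.det = 1) : (E * (1 - A) * B).det = 1 := by
  have h1 : (1 - A).det = (1 + A).det := by
    rw [← det_transpose, transpose_sub, transpose_one, hA, sub_neg_eq_add]
  rw [det_mul, det_mul, hE, one_mul, h1, ← det_mul, hB, det_one]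

/-- The Cayley transform of an orthogonal `W` with `1 + W` invertible is skew-symmetric. -/
theorem inv_cayley_skew {W D : Matrix (Fin n) (Fin n) S} (hW : W * Wᵀ = 1)
    (hD : (1 + W) * D = 1) : ((1 - W) * D)ᵀ = -((1 - W) * D) := by
  have hW' : Wᵀ * W = 1 := mul_eq_one_comm.1 hW
  have hDt : Dᵀ * (1 + Wᵀ) = 1 := by
    have := congrArg transpose hD
    rwa [transpose_mul, transpose_add, transpose_one] at this
  calc ((1 - W) * D)ᵀ = Dᵀ * (1 - Wᵀ) * ((1 + W) * D) := by
        rw [hD, Matrix.mul_one, transpose_mul, transpose_sub, transpose_one]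
    _ = Dᵀ * (1 + W - Wᵀ - Wᵀ * W) * D := by noncomm_ring
    _ = Dᵀ * (Wᵀ * W + W - Wᵀ - 1) * D := by
        rw [hW']
    _ = - (Dᵀ * (1 + Wᵀ) * ((1 - W) * D)) := by noncomm_ring
    _ = -((1 - W) * D) := by rw [hDt, Matrix.one_mul]

theorem one_add_one_sub_mul {X B : Matrix (Fin n) (Fin n) S} (h : (1 + X) * B = 1) :
    1 + (1 - X) * B = (1 + 1) * B := by
  calc 1 + (1 - X) * B = (1 + X) * B + (1 - X) * B := by rw [h]
    _ = (1 + 1) * B := by noncomm_ring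

theorem one_sub_one_sub_mul {X B : Matrix (Fin n) (Fin n) S} (h : (1 + X) * B = 1) :
    1 - (1 - X) * B = X * ((1 + 1) * B) := by
  calc 1 - (1 - X) * B = (1 + X) * B - (1 - X) * B := by rw [h]
    _ = X * ((1 + 1) * B) := by noncomm_ring

end Cayley

/-! ### The functions defining the Cayley charts -/

/-- The index set of the Cayley charts: sign vectors of product `1`. -/
abbrev SignIndex (n : ℕ) : Type := {ε : Fin n → ℤˣ // ∏ i, ε i = 1}

/-- The function `det (1 + E Y)` on the characteristic variety, with `E` the sign matrix of `ε`. -/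
noncomputable def chartFun {n : ℕ} (ε : SignIndex n) : CharRing n :=
  (1 + signMat (CharRing n) ε.1 * genY n).det

/-- The Cayley charts cover the characteristic variety. The functions `det (1 + E Y)` over all sign
matrices sum to the unit `2 ^ n`, and those with `det E = -1` are zero. -/
theorem span_chartFun (n : ℕ) : Ideal.span (Set.range (chartFun (n := n))) = ⊤ := by
  have h2 : IsUnit ((2 : CharRing n) ^ n) := by
    have : IsUnit (algebraMap ℂ (CharRing n) 2) := (IsUnit.mk0 (2 : ℂ) two_ne_zero).map _
    rw [map_ofNat] at this
    exact this.pow n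
  refine Ideal.eq_top_of_isUnit_mem _ ?_ h2
  rw [← sum_det_one_add_signMat (genY n)]
  refine Ideal.sum_mem _ fun ε _ => ?_
  rcases Int.units_eq_one_or (∏ i, ε i) with h | h
  · exact Ideal.subset_span ⟨⟨ε, h⟩, rfl⟩
  · have horth : signMat (CharRing n) ε * genY n * (signMat (CharRing n) ε * genY n)ᵀ = 1 := by
      rw [transpose_mul, signMat_transpose, Matrix.mul_assoc, ← Matrix.mul_assoc (genY n),
        genY_mul_transpose, Matrix.one_mul, signMat_mul_self]
    have h3 := det_one_add_orth horth
    rw [det_mul, det_signMat, h, det_genY] at h3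
    set x := (1 + signMat (CharRing n) ε * genY n).det
    have h4 : algebraMap ℂ (CharRing n) 2 * x = 0 := by
      rw [map_ofNat]
      have h5 : x = -x := by
        rw [Units.val_neg, Units.val_one, Int.cast_neg, Int.cast_one] at h3
        linear_combination h3
      linear_combination h5
    have h5 : x = 0 := ((IsUnit.mk0 (2 : ℂ) two_ne_zero).map
      (algebraMap ℂ (CharRing n))).mul_right_eq_zero.1 h4
    rw [h5]
    exact Ideal.zero_mem _

/-- The point of `SO(n, ℂ)` common to two charts, with `Ξ = 0`, as a point of `CharRing n`. -/
theorem exists_chart_point {n : ℕ} (ε ε' : SignIndex n) :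
    ∃ χ : CharRing n →+* ℂ, χ (chartFun ε) ≠ 0 ∧ χ (chartFun ε') ≠ 0 := by
  obtain ⟨Y, hY, hdet, h1, h2⟩ := exists_common_point ε.1 ε'.1 ε.2 ε'.2
  have hY' : Yᵀ * Y = 1 := mul_eq_one_comm.1 hY
  refine ⟨(charLift Y 0 hY' hdet (by simp)).toRingHom, ?_, ?_⟩
  all_goals
    rw [chartFun, RingHom.map_det, map_add, map_one, map_mul, signMat_map, charLift_genY]
    assumption

/-! ### The coordinate ring of a Cayley chart -/

/-- The generic `n × n` matrix. -/
noncomputable def genM (n : ℕ) : Matrix (Fin n) (Fin n) (MvPolynomial (Fin n × Fin n) ℂ) :=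
  of fun i j => X (i, j)

/-- The function `det (1 + M - Mᵀ)` on the affine space of matrices. -/
noncomputable def cayleyDen (n : ℕ) : MvPolynomial (Fin n × Fin n) ℂ :=
  (1 + (genM n - (genM n)ᵀ)).det

/-- The coordinate ring of a Cayley chart: polynomials in the entries of a generic matrix `M`, with
`det (1 + M - Mᵀ)` inverted. It does not depend on the sign matrix. -/
abbrev ChartRing (n : ℕ) : Type := Localization.Away (cayleyDen n)

/-- The generic matrix over the chart ring. -/
noncomputable def chartM (n : ℕ) : Matrix (Fin n) (Fin n) (ChartRing n) :=
  (algebraMap (MvPolynomial (Fin n × Fin n) ℂ) (ChartRing n)).mapMatrix (genM n)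

theorem isUnit_det_chart (n : ℕ) : IsUnit (1 + (chartM n - (chartM n)ᵀ)).det := by
  have h : (1 + (chartM n - (chartM n)ᵀ)).det = algebraMap _ (ChartRing n) (cayleyDen n) := by
    have h1 := RingHom.map_det (algebraMap (MvPolynomial (Fin n × Fin n) ℂ) (ChartRing n))
      (1 + (genM n - (genM n)ᵀ))
    rw [map_add, map_one, map_sub] at h1
    exact h1.symm
  rw [h]
  exact IsLocalization.Away.algebraMap_isUnit _

theorem aeval_cayleyDen (n : ℕ) : aeval (fun _ => (0 : ℂ)) (cayleyDen n) ≠ 0 := by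
  have : (aeval (fun _ => (0 : ℂ)) : MvPolynomial (Fin n × Fin n) ℂ →ₐ[ℂ] ℂ).mapMatrix (genM n)
      = 0 := by
    ext i j; simp [genM]
  rw [cayleyDen, AlgHom.map_det, map_add, map_one, map_sub, this]
  have h2 : (aeval (fun _ => (0 : ℂ)) : MvPolynomial (Fin n × Fin n) ℂ →ₐ[ℂ] ℂ).mapMatrix
      (genM n)ᵀ = 0 := by
    ext i j; simp [genM]
  rw [h2]
  simp

theorem cayleyDen_ne_zero (n : ℕ) : cayleyDen n ≠ 0 := fun h => by
  have := aeval_cayleyDen n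
  rw [h, map_zero] at this
  exact this rfl

instance (n : ℕ) : IsDomain (ChartRing n) :=
  IsLocalization.isDomain_localization (powers_le_nonZeroDivisors_of_noZeroDivisors
    (cayleyDen_ne_zero n))

theorem ringKrullDim_chartRing (n : ℕ) : ringKrullDim (ChartRing n) = (n ^ 2 : ℕ) := by
  rw [ringKrullDim_away _ (aeval_cayleyDen n)]
  simp [sq]

/-! ### The localizations of the quotient ring are Cayley charts -/

section chart
variable {n : ℕ}

theorem mapMatrix_transpose {S S' : Type*} [CommRing S] [CommRing S'] (φ : S →+* S')
    (M : Matrix (Fin n) (Fin n) S) : φ.mapMatrix Mᵀ = (φ.mapMatrix M)ᵀ := rfl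

/-- The skew-symmetric part (up to the factor `2`) of the generic matrix on a chart. -/
noncomputable def chartA (n : ℕ) : Matrix (Fin n) (Fin n) (ChartRing n) :=
  chartM n - (chartM n)ᵀ

/-- The symmetric part (up to the factor `2`) of the generic matrix on a chart. -/
noncomputable def chartS (n : ℕ) : Matrix (Fin n) (Fin n) (ChartRing n) :=
  chartM n + (chartM n)ᵀ

/-- The special orthogonal matrix `E (1 - A) (1 + A)⁻¹` on a chart. -/
noncomputable def chartY (ε : SignIndex n) : Matrix (Fin n) (Fin n) (ChartRing n) :=
  signMat _ ε.1 * (1 - chartA n) * (1 + chartA n)⁻¹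

theorem chartA_transpose : (chartA n)ᵀ = -chartA n := by
  simp [chartA]

theorem one_add_chartA_mul_inv : (1 + chartA n) * (1 + chartA n)⁻¹ = 1 :=
  mul_nonsing_inv _ (isUnit_det_chart n)

theorem chartY_orth (ε : SignIndex n) : (chartY ε)ᵀ * chartY ε = 1 :=
  cayley_orth chartA_transpose one_add_chartA_mul_inv (signMat_transpose _) (signMat_mul_self _)

theorem signMat_chartY (ε : SignIndex n) :
    signMat _ ε.1 * chartY ε = (1 - chartA n) * (1 + chartA n)⁻¹ := by
  rw [chartY, ← Matrix.mul_assoc, ← Matrix.mul_assoc, signMat_mul_self, Matrix.one_mul]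

/-- The restriction of functions to a chart: `Y` is sent to `E (1 - A) (1 + A)⁻¹`, and `Ξ` to the
product of this matrix with `S`. -/
noncomputable def toChart (ε : SignIndex n) : CharRing n →ₐ[ℂ] ChartRing n :=
  charLift (chartY ε) (chartY ε * chartS n) (chartY_orth ε)
    (cayley_det chartA_transpose one_add_chartA_mul_inv (by rw [det_signMat, ε.2]; simp)) (by
      rw [← Matrix.mul_assoc, chartY_orth, Matrix.one_mul, chartS, transpose_add,
        transpose_transpose, add_comm])

theorem toChart_genY (ε : SignIndex n) :
    (toChart ε).toRingHom.mapMatrix (genY n) = chartY ε := charLift_genY ..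

theorem toChart_genXi (ε : SignIndex n) :
    (toChart ε).toRingHom.mapMatrix (genXi n) = chartY ε * chartS n := charLift_genXi ..

theorem one_add_signMat_chartY (ε : SignIndex n) :
    1 + signMat _ ε.1 * chartY ε = (1 + 1) * (1 + chartA n)⁻¹ := by
  rw [signMat_chartY, one_add_one_sub_mul one_add_chartA_mul_inv]

theorem isUnit_two_matrix {S : Type*} [CommRing S] [Algebra ℂ S] :
    IsUnit (1 + 1 : Matrix (Fin n) (Fin n) S) := by
  have h := (IsUnit.mk0 (2 : ℂ) two_ne_zero).map (algebraMap ℂ (Matrix (Fin n) (Fin n) S))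
  rw [map_ofNat] at h
  rwa [one_add_one_eq_two]

/-- The function `det (1 + E Y)` becomes invertible on its chart, where `1 + E Y = 2 (1 + A)⁻¹`. -/
theorem isUnit_toChart (ε : SignIndex n) : IsUnit (toChart ε (chartFun ε)) := by
  have h : toChart ε (chartFun ε) = ((1 + 1) * (1 + chartA n)⁻¹).det := by
    rw [← one_add_signMat_chartY, ← toChart_genY, ← signMat_map ε.1 (toChart ε).toRingHom,
      ← map_mul, ← map_one (toChart ε).toRingHom.mapMatrix, ← map_add, ← RingHom.map_det]
    simp [chartFun]
  rw [h, ← isUnit_iff_isUnit_det]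
  exact isUnit_two_matrix.mul
    (IsUnit.of_mul_eq_one _ (mul_eq_one_comm.1 one_add_chartA_mul_inv))

/-- The localization of `CharRing n` at `det (1 + E Y)`. -/
abbrev LocRing (ε : SignIndex n) : Type := Localization.Away (chartFun ε)

/-- The generic matrix `Y` over the localization. -/
noncomputable def locY (ε : SignIndex n) : Matrix (Fin n) (Fin n) (LocRing ε) :=
  (algebraMap (CharRing n) (LocRing ε)).mapMatrix (genY n)

/-- The generic matrix `Ξ` over the localization. -/
noncomputable def locXi (ε : SignIndex n) : Matrix (Fin n) (Fin n) (LocRing ε) :=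
  (algebraMap (CharRing n) (LocRing ε)).mapMatrix (genXi n)

/-- The twisted matrix `W = E Y`, for which `1 + W` is invertible. -/
noncomputable def locW (ε : SignIndex n) : Matrix (Fin n) (Fin n) (LocRing ε) :=
  signMat _ ε.1 * locY ε

/-- The skew-symmetric matrix recovered from `W` by the Cayley transform, which is an involution. -/
noncomputable def locA (ε : SignIndex n) : Matrix (Fin n) (Fin n) (LocRing ε) :=
  (1 - locW ε) * (1 + locW ε)⁻¹

/-- The symmetric matrix recovered as `Yᵀ Ξ`. -/
noncomputable def locS (ε : SignIndex n) : Matrix (Fin n) (Fin n) (LocRing ε) :=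
  (locY ε)ᵀ * locXi ε

theorem locY_orth (ε : SignIndex n) : (locY ε)ᵀ * locY ε = 1 := by
  have := congrArg (algebraMap (CharRing n) (LocRing ε)).mapMatrix (genY_transpose_mul n)
  rwa [map_mul, map_one] at this

theorem locS_transpose (ε : SignIndex n) : (locS ε)ᵀ = locS ε := by
  have h := congrArg (algebraMap (CharRing n) (LocRing ε)).mapMatrix (genY_genXi_symm n)
  rwa [mapMatrix_transpose, map_mul, mapMatrix_transpose] at h

theorem locW_orth (ε : SignIndex n) : locW ε * (locW ε)ᵀ = 1 := by
  rw [locW, transpose_mul, signMat_transpose, Matrix.mul_assoc, ← Matrix.mul_assoc (locY ε),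
    mul_eq_one_comm.1 (locY_orth ε), Matrix.one_mul, signMat_mul_self]

theorem locW_inv (ε : SignIndex n) : (1 + locW ε) * (1 + locW ε)⁻¹ = 1 := by
  refine mul_nonsing_inv _ ?_
  have h1 := RingHom.map_det (algebraMap (CharRing n) (LocRing ε))
    (1 + signMat _ ε.1 * genY n)
  rw [map_add, map_one, map_mul, signMat_map] at h1
  change IsUnit (1 + signMat _ ε.1 * locY ε).det
  rw [locY, ← h1]
  exact IsLocalization.Away.algebraMap_isUnit (chartFun ε)

theorem locA_transpose (ε : SignIndex n) : (locA ε)ᵀ = -locA ε :=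
  inv_cayley_skew (locW_orth ε) (locW_inv ε)

theorem one_add_locA (ε : SignIndex n) : 1 + locA ε = (1 + 1) * (1 + locW ε)⁻¹ :=
  one_add_one_sub_mul (locW_inv ε)

theorem locA_mul (ε : SignIndex n) : locA ε * (1 + locW ε) = 1 - locW ε := by
  rw [locA, Matrix.mul_assoc, mul_eq_one_comm.1 (locW_inv ε), Matrix.mul_one]

theorem one_sub_locA (ε : SignIndex n) : 1 - locA ε = locW ε * (1 + locA ε) := by
  rw [one_add_locA, locA, one_sub_one_sub_mul (locW_inv ε)]

theorem isUnit_one_add_locA (ε : SignIndex n) : IsUnit (1 + locA ε) := by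
  rw [one_add_locA]
  exact isUnit_two_matrix.mul (IsUnit.of_mul_eq_one _ (mul_eq_one_comm.1 (locW_inv ε)))

/-- The matrix `M` with `M - Mᵀ` and `M + Mᵀ` equal to `locA` and `locS`. -/
noncomputable def locM (ε : SignIndex n) : Matrix (Fin n) (Fin n) (LocRing ε) :=
  (1 / 2 : ℂ) • (locA ε + locS ε)

theorem locM_sub (ε : SignIndex n) : locM ε - (locM ε)ᵀ = locA ε := by
  rw [locM, transpose_smul, transpose_add, locA_transpose, locS_transpose]
  module

theorem locM_add (ε : SignIndex n) : locM ε + (locM ε)ᵀ = locS ε := by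
  rw [locM, transpose_smul, transpose_add, locA_transpose, locS_transpose]
  module

/-- The homomorphism sending the generic matrix to `locM`. -/
noncomputable def polyToLoc (ε : SignIndex n) : MvPolynomial (Fin n × Fin n) ℂ →ₐ[ℂ] LocRing ε :=
  aeval fun q => locM ε q.1 q.2

theorem polyToLoc_genM (ε : SignIndex n) :
    (polyToLoc ε).toRingHom.mapMatrix (genM n) = locM ε := by
  ext i j
  simp [polyToLoc, genM]

theorem isUnit_polyToLoc (ε : SignIndex n) : IsUnit ((polyToLoc ε).toRingHom (cayleyDen n)) := by
  have h : (polyToLoc ε).toRingHom.mapMatrix (genM n)ᵀ = (locM ε)ᵀ := by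
    rw [← polyToLoc_genM]; rfl
  rw [cayleyDen, RingHom.map_det, map_add, map_one, map_sub, h, polyToLoc_genM, locM_sub,
    ← isUnit_iff_isUnit_det]
  exact isUnit_one_add_locA ε

/-- The extension of `polyToLoc` to the chart ring; it is the inverse of `locToChart`. -/
noncomputable def ofChart (ε : SignIndex n) : ChartRing n →+* LocRing ε :=
  IsLocalization.Away.lift (cayleyDen n) (isUnit_polyToLoc ε)

/-- The extension of `toChart` to the localization. -/
noncomputable def locToChart (ε : SignIndex n) : LocRing ε →+* ChartRing n :=
  IsLocalization.Away.lift (g := (toChart ε).toRingHom) (chartFun ε) (isUnit_toChart ε)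

theorem ofChart_algebraMap (ε : SignIndex n) (q : MvPolynomial (Fin n × Fin n) ℂ) :
    ofChart ε (algebraMap _ _ q) = polyToLoc ε q := IsLocalization.Away.lift_eq _ _ _

theorem locToChart_algebraMap (ε : SignIndex n) (q : CharRing n) :
    locToChart ε (algebraMap _ _ q) = toChart ε q := IsLocalization.Away.lift_eq _ _ _

theorem ofChart_chartM (ε : SignIndex n) : (ofChart ε).mapMatrix (chartM n) = locM ε := by
  rw [← polyToLoc_genM]
  ext i j
  exact ofChart_algebraMap ε _

theorem locToChart_locY (ε : SignIndex n) : (locToChart ε).mapMatrix (locY ε) = chartY ε := by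
  rw [← toChart_genY]
  ext i j
  exact locToChart_algebraMap ε _

theorem locToChart_locXi (ε : SignIndex n) :
    (locToChart ε).mapMatrix (locXi ε) = chartY ε * chartS n := by
  rw [← toChart_genXi]
  ext i j
  exact locToChart_algebraMap ε _

theorem ofChart_chartA (ε : SignIndex n) : (ofChart ε).mapMatrix (chartA n) = locA ε := by
  rw [chartA, map_sub, mapMatrix_transpose, ofChart_chartM, locM_sub]

theorem ofChart_chartS (ε : SignIndex n) : (ofChart ε).mapMatrix (chartS n) = locS ε := by
  rw [chartS, map_add, mapMatrix_transpose, ofChart_chartM, locM_add]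

/-- Follows by cancelling the invertible factor `1 + A` in `Y (1 + A) = E (1 - A)`, which avoids
transporting the inverse matrix. -/
theorem ofChart_chartY (ε : SignIndex n) : (ofChart ε).mapMatrix (chartY ε) = locY ε := by
  have h : chartY ε * (1 + chartA n) = signMat _ ε.1 * (1 - chartA n) := by
    rw [chartY, Matrix.mul_assoc, mul_eq_one_comm.1 one_add_chartA_mul_inv, Matrix.mul_one]
  have h2 := congrArg (ofChart ε).mapMatrix h
  rw [map_mul, map_mul, map_add, map_sub, map_one, ofChart_chartA, signMat_map, one_sub_locA,
    ← Matrix.mul_assoc, locW, ← Matrix.mul_assoc, signMat_mul_self, Matrix.one_mul] at h2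
  exact (isUnit_one_add_locA ε).mul_right_cancel h2

theorem locToChart_locA (ε : SignIndex n) : (locToChart ε).mapMatrix (locA ε) = chartA n := by
  have h2 := congrArg (locToChart ε).mapMatrix (locA_mul ε)
  have hW : (locToChart ε).mapMatrix (locW ε) = signMat _ ε.1 * chartY ε := by
    rw [locW, map_mul, signMat_map, locToChart_locY]
  rw [map_mul, map_add, map_sub, map_one, hW, one_add_signMat_chartY, signMat_chartY] at h2
  rw [one_sub_one_sub_mul one_add_chartA_mul_inv] at h2
  exact (isUnit_two_matrix.mul (IsUnit.of_mul_eq_one _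
    (mul_eq_one_comm.1 one_add_chartA_mul_inv))).mul_right_cancel h2

theorem locToChart_locS (ε : SignIndex n) : (locToChart ε).mapMatrix (locS ε) = chartS n := by
  rw [locS, map_mul, mapMatrix_transpose, locToChart_locY, locToChart_locXi, ← Matrix.mul_assoc,
    chartY_orth, Matrix.one_mul]

theorem ofChart_algebraMap_C (ε : SignIndex n) (c : ℂ) :
    ofChart ε (algebraMap ℂ _ c) = algebraMap ℂ _ c := by
  rw [IsScalarTower.algebraMap_apply ℂ (MvPolynomial (Fin n × Fin n) ℂ) (ChartRing n),
    ofChart_algebraMap, AlgHom.commutes]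

theorem locToChart_algebraMap_C (ε : SignIndex n) (c : ℂ) :
    locToChart ε (algebraMap ℂ _ c) = algebraMap ℂ _ c := by
  rw [IsScalarTower.algebraMap_apply ℂ (CharRing n) (LocRing ε),
    locToChart_algebraMap, AlgHom.commutes]

/-- The localization of `CharRing n` at `det (1 + E Y)` is the coordinate ring of a Cayley chart. The
two composites are the identity because they fix the scalars and the generic matrices. -/
noncomputable def chartEquiv (ε : SignIndex n) : LocRing ε ≃+* ChartRing n :=
  RingEquiv.ofRingHom (locToChart ε) (ofChart ε)
    (by
      apply IsLocalization.ringHom_ext (Submonoid.powers (cayleyDen n))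
      apply MvPolynomial.ringHom_ext
      · intro c
        have h := ofChart_algebraMap_C ε c
        have h2 := locToChart_algebraMap_C ε c
        simp only [RingHom.comp_apply, RingHom.id_apply]
        have h3 : algebraMap (MvPolynomial (Fin n × Fin n) ℂ) (ChartRing n) (C c) =
          algebraMap ℂ _ c := rfl
        rw [h3, h, h2]
      · rintro ⟨i, j⟩
        have hM : (locToChart ε).mapMatrix ((ofChart ε).mapMatrix (chartM n)) = chartM n := by
          have h2 : (1 + 1) * (locToChart ε).mapMatrix (locM ε) = (1 + 1) * chartM n := by
            have h1 : (1 + 1) * locM ε = locA ε + locS ε := by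
              rw [← locM_sub, ← locM_add]; noncomm_ring
            have := congrArg (locToChart ε).mapMatrix h1
            rw [map_mul, map_add, map_add, map_one, locToChart_locA, locToChart_locS] at this
            rw [this, chartA, chartS]
            noncomm_ring
          rw [ofChart_chartM]
          exact isUnit_two_matrix.mul_left_cancel h2
        exact congrFun (congrFun hM i) j)
    (by
      apply IsLocalization.ringHom_ext (Submonoid.powers (chartFun ε))
      apply Ideal.Quotient.ringHom_ext
      apply MvPolynomial.ringHom_ext
      · intro c
        have h := ofChart_algebraMap_C ε c
        have h2 := locToChart_algebraMap_C ε c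
        simp only [RingHom.comp_apply, RingHom.id_apply]
        have h3 : algebraMap (CharRing n) (LocRing ε) (Ideal.Quotient.mk _ (C c)) =
          algebraMap ℂ _ c := rfl
        rw [h3, h2, h]
      · rintro (⟨i, j⟩ | ⟨i, j⟩)
        · have hY : (ofChart ε).mapMatrix ((locToChart ε).mapMatrix (locY ε)) = locY ε := by
            rw [locToChart_locY, ofChart_chartY]
          exact congrFun (congrFun hY i) j
        · have hX : (ofChart ε).mapMatrix ((locToChart ε).mapMatrix (locXi ε)) = locXi ε := by
            rw [locToChart_locXi, map_mul, ofChart_chartY, ofChart_chartS, locS,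
              ← Matrix.mul_assoc, mul_eq_one_comm.1 (locY_orth ε), Matrix.one_mul]
          exact congrFun (congrFun hX i) j)

end chart

/-! ### The domain property and the dimension -/

theorem toChart_eq_zero {n : ℕ} (ε : SignIndex n) (a : CharRing n)
    (ha : (toChart ε).toRingHom a = 0) : ∃ k : ℕ, chartFun ε ^ k * a = 0 := by
  have h : chartEquiv ε (algebraMap (CharRing n) (LocRing ε) a) = 0 :=
    (locToChart_algebraMap ε a).trans ha
  rw [EmbeddingLike.map_eq_zero_iff,
    IsLocalization.map_eq_zero_iff (Submonoid.powers (chartFun ε))] at h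
  obtain ⟨⟨_, k, rfl⟩, hk⟩ := h
  exact ⟨k, hk⟩

theorem isDomain_charRing (n : ℕ) : IsDomain (CharRing n) := by
  have : Nontrivial (CharRing n) :=
    (exists_chart_point (n := n) ⟨1, by simp⟩ ⟨1, by simp⟩).choose.domain_nontrivial
  exact isDomain_of_cover (L := ChartRing n) chartFun (span_chartFun n)
    (fun ε => (toChart ε).toRingHom) toChart_eq_zero exists_chart_point

theorem ringKrullDim_charRing (n : ℕ) : ringKrullDim (CharRing n) = (n ^ 2 : ℕ) := by
  have : Nonempty (SignIndex n) := ⟨⟨1, by simp⟩⟩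
  refine ringKrullDim_of_cover chartFun (span_chartFun n) _ fun ε => ?_
  rw [ringKrullDim_eq_of_ringEquiv (chartEquiv ε), ringKrullDim_chartRing]

theorem characteristic_ideal_prime_and_dim (n : ℕ) (hn : 1 ≤ n) :
    let T := MvPolynomial ((Fin n × Fin n) ⊕ (Fin n × Fin n)) ℂ
    let J : Ideal T := Ideal.span
      (orthoGens n ∪
        {p | ∃ i j : Fin n, i < j ∧
            p = ∑ k, (Yv n k i * Xv n k j - Yv n k j * Xv n k i)})
    J.IsPrime ∧ ringKrullDim (T ⧸ J) = (n ^ 2 : ℕ) := by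
  exact ⟨(Ideal.Quotient.isDomain_iff_prime (charIdeal n)).1 (isDomain_charRing n),
    ringKrullDim_charRing n⟩
end
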